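/- arXiv:2304.14150 — 4 statements merged into one kernel-verified Lean document; each statement's English description precedes it below -/
import Mathlib

section
/- In the field of formal Laurent series K((z)), the series X(z) and Y(z) built from the Weierstrass recurrence satisfy the short Weierstrass equation: Y(z)^2 = X(z)^3 + a·X(z) + b. -/
/-- The Weierstrass recurrence: `c 2 = -a/5`, `c 3 = -b/7`, and for `l ≥ 4`,
`c l = (3 / ((2l+1)(l-3))) * ∑_{s=2}^{l-2} c s * c (l-s)`. -/
def WeierstrassRec {K : Type*} [Field K] (a b : K) (c : ℕ → K) : Prop :=
  c 2 = -a / 5 ∧ c 3 = -b / 7 ∧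
    ∀ l : ℕ, 4 ≤ l →
      c l = 3 / ((2 * (l : K) + 1) * ((l : K) - 3)) *
        ∑ s ∈ Finset.Icc 2 (l - 2), c s * c (l - s)

/-- `X` is the formal Laurent series `z⁻² + ∑_{l ≥ 2} c l · z^(2l-2)`
(the expansion of the Weierstrass ℘-function). -/
def IsWeierstrassX {K : Type*} [Field K] (c : ℕ → K) (X : LaurentSeries K) : Prop :=
  X.coeff (-2) = 1 ∧ (∀ l : ℕ, 2 ≤ l → X.coeff (2 * (l : ℤ) - 2) = c l) ∧
    ∀ n : ℤ, n ≠ -2 → (∀ l : ℕ, 2 ≤ l → n ≠ 2 * (l : ℤ) - 2) → X.coeff n = 0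

/-- `Y` is the formal Laurent series `-z⁻³ + ∑_{l ≥ 2} (l-1) · c l · z^(2l-3)`
(the expansion of `(1/2)℘′`). -/
def IsWeierstrassY {K : Type*} [Field K] (c : ℕ → K) (Y : LaurentSeries K) : Prop :=
  Y.coeff (-3) = -1 ∧ (∀ l : ℕ, 2 ≤ l → Y.coeff (2 * (l : ℤ) - 3) = ((l : K) - 1) * c l) ∧
    ∀ n : ℤ, n ≠ -3 → (∀ l : ℕ, 2 ≤ l → n ≠ 2 * (l : ℤ) - 3) → Y.coeff n = 0

/-!
In the variable `t = z²`, clearing the poles of `X = ℘` and `Y = ℘' / 2` gives power series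
`P = z² X` and `Q = z³ Y`. Let `θ = t d/dt`. The relation `X' = 2 Y` becomes `θ P = P + Q`, and the
recurrence for `c` is, coefficient by coefficient, the equation `Y' = 3 X² + a`, which becomes
`2 θ Q = 3 Q + 3 P² + a t²`. Together they make `Q² - (P³ + a t² P + b t³)` an eigenvector of `θ`
for the eigenvalue `3`, that is a multiple of `t³`. The recurrence leaves `c 3` free, and its value
`-b / 7` is the one for which the coefficient of `t³` vanishes.
-/

open PowerSeries

section EulerDerivation

/-- The Euler operator `X · d/dX` on formal power series, which multiplies the coefficient of
`X ^ n` by `n`. -/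
noncomputable def eulerDerivation (R : Type*) [CommSemiring R] : Derivation R R⟦X⟧ R⟦X⟧ :=
  (X : R⟦X⟧) • derivative R

section CommSemiring

variable {R : Type*} [CommSemiring R]

theorem coeff_eulerDerivation (f : R⟦X⟧) (n : ℕ) :
    coeff n (eulerDerivation R f) = n * coeff n f := by
  cases n with
  | zero => simp [eulerDerivation]
  | succ n => simp [eulerDerivation, coeff_succ_X_mul, coeff_derivative, mul_comm]

theorem eulerDerivation_X : eulerDerivation R X = X := by
  simp [eulerDerivation]

theorem eulerDerivation_C (r : R) : eulerDerivation R (C r) = 0 := by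
  simp [eulerDerivation]

theorem eulerDerivation_X_pow_mul (n : ℕ) (f : R⟦X⟧) :
    eulerDerivation R (X ^ n * f) = X ^ n * (eulerDerivation R f + n • f) := by
  ext d
  simp only [coeff_eulerDerivation, coeff_X_pow_mul', map_add, map_nsmul]
  split_ifs with h
  · rw [nsmul_eq_mul, ← add_mul, ← Nat.cast_add, Nat.sub_add_cancel h]
  · rw [mul_zero]

end CommSemiring

theorem eq_zero_of_eulerDerivation_eq_nsmul {R : Type*} [CommRing R] [IsAddTorsionFree R]
    {f : R⟦X⟧} {k : ℕ} (hf : eulerDerivation R f = k • f) (hk : coeff k f = 0) : f = 0 := by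
  ext n
  by_contra hn
  have h : (n : ℤ) • coeff n f = (k : ℤ) • coeff n f := by
    rw [natCast_zsmul, natCast_zsmul, ← map_nsmul _ k, ← hf, coeff_eulerDerivation,
      nsmul_eq_mul]
  have hnk : n = k := by exact_mod_cast smul_left_injective ℤ hn h
  exact hn (hnk ▸ hk)

end EulerDerivation

-- This is the homogenization by `t` of the fact that `y² - (x³ + a x + b)` is a first integral of
-- `x' = 2 y`, `y' = 3 x² + a`, where `t`, `x`, `y` have weights `1`, `2`, `3`.
theorem derivation_weierstrass_defect {R A : Type*} [CommSemiring R] [CommRing A] [Algebra R A]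
    (D : Derivation R A A) {a b t x y : A} (ha : D a = 0) (hb : D b = 0) (ht : D t = t)
    (hx : D x = x + y) (hy : 2 * D y = 3 * y + 3 * x ^ 2 + a * t ^ 2) :
    D (y ^ 2 - (x ^ 3 + a * t ^ 2 * x + b * t ^ 3)) =
      3 • (y ^ 2 - (x ^ 3 + a * t ^ 2 * x + b * t ^ 3)) := by
  simp only [map_sub, map_add, Derivation.leibniz, Derivation.leibniz_pow, ha, hb, ht, hx,
    smul_eq_mul, nsmul_eq_mul]
  push_cast
  linear_combination y * hy

section ClearedSeries

/-- The series `∑ c (n + 2) t ^ n`, which is `z⁻² (℘(z) - z⁻²)` in the variable `t = z²`. The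
convolution sum of the recurrence is a coefficient of its square. -/
def weierstrassTail {R : Type*} (c : ℕ → R) : R⟦X⟧ :=
  mk fun n ↦ c (n + 2)

/-- The series `1 + ∑_{l ≥ 2} c l t ^ l`, which is `z² ℘(z)` in the variable `t = z²`: the pole is
cleared and only even powers of `z` occur. -/
noncomputable def clearedX {R : Type*} [CommSemiring R] (c : ℕ → R) : R⟦X⟧ :=
  1 + X ^ 2 * weierstrassTail c

/-- The series `-1 + ∑_{l ≥ 2} (l - 1) c l t ^ l`, which is `z³ ℘'(z) / 2` in the variable
`t = z²`; there `z d/dz` is twice the Euler operator. -/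
noncomputable def clearedY {R : Type*} [CommRing R] (c : ℕ → R) : R⟦X⟧ :=
  eulerDerivation R (clearedX c) - clearedX c

section CommSemiring

variable {R : Type*} [CommSemiring R] (c : ℕ → R)

theorem coeff_weierstrassTail (n : ℕ) : coeff n (weierstrassTail c) = c (n + 2) :=
  coeff_mk n _

theorem coeff_zero_clearedX : coeff 0 (clearedX c) = 1 := by
  simp [clearedX]

theorem coeff_one_clearedX : coeff 1 (clearedX c) = 0 := by
  simp [clearedX, coeff_X_pow_mul', coeff_one]

theorem coeff_add_two_clearedX (n : ℕ) : coeff (n + 2) (clearedX c) = c (n + 2) := by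
  simp [clearedX, coeff_weierstrassTail, coeff_X_pow_mul, coeff_one]

theorem coeff_weierstrassTail_sq (n : ℕ) :
    coeff n (weierstrassTail c ^ 2) = ∑ s ∈ Finset.Icc 2 (n + 2), c s * c (n + 4 - s) := by
  rw [sq, coeff_mul, Finset.Nat.sum_antidiagonal_eq_sum_range_succ_mk,
    ← Finset.Ico_add_one_right_eq_Icc, Finset.sum_Ico_eq_sum_range]
  refine Finset.sum_congr rfl fun i hi ↦ ?_
  have hi' : n + 4 - (2 + i) = n - i + 2 := by grind
  rw [hi', add_comm 2 i, coeff_weierstrassTail, coeff_weierstrassTail]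

end CommSemiring

variable {R : Type*} [CommRing R] (c : ℕ → R)

theorem coeff_clearedY (n : ℕ) : coeff n (clearedY c) = (n - 1) * coeff n (clearedX c) := by
  rw [clearedY, map_sub, coeff_eulerDerivation, sub_one_mul]

theorem clearedY_eq :
    clearedY c = -1 + X ^ 2 * (eulerDerivation R (weierstrassTail c) + weierstrassTail c) := by
  rw [clearedY, clearedX, map_add, Derivation.map_one_eq_zero, eulerDerivation_X_pow_mul]
  ring

theorem eulerDerivation_clearedX : eulerDerivation R (clearedX c) = clearedX c + clearedY c :=
  (add_sub_cancel _ _).symm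

end ClearedSeries

namespace WeierstrassRec

variable {K : Type*} [Field K] [CharZero K] {a b : K} {c : ℕ → K}

theorem mul_coeff_add_four (hc : WeierstrassRec a b c) (n : ℕ) :
    (2 * (n : K) + 9) * (n + 1) * c (n + 4) = 3 * coeff n (weierstrassTail c ^ 2) := by
  have h₁ : 2 * (n : K) + 9 ≠ 0 := by norm_cast
  have h₂ : (n : K) + 1 ≠ 0 := n.cast_add_one_ne_zero
  have e₁ : 2 * ((n + 4 : ℕ) : K) + 1 = 2 * n + 9 := by push_cast; ring
  have e₂ : ((n + 4 : ℕ) : K) - 3 = n + 1 := by push_cast; ring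
  rw [coeff_weierstrassTail_sq, hc.2.2 (n + 4) (by lia), e₁, e₂, Nat.add_sub_assoc (by lia)]
  field_simp

theorem eulerDerivation_weierstrassTail (hc : WeierstrassRec a b c) :
    2 * eulerDerivation K (eulerDerivation K (weierstrassTail c)) +
        3 * eulerDerivation K (weierstrassTail c) =
      5 * weierstrassTail c + 3 * (X ^ 2 * weierstrassTail c ^ 2) + C a := by
  simp only [← map_ofNat (C : K →+* K⟦X⟧)]
  ext n
  simp only [map_add, coeff_C_mul, coeff_eulerDerivation, coeff_weierstrassTail, coeff_X_pow_mul',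
    coeff_C]
  match n with
  | 0 =>
    have h : 5 * c 2 = -a := by rw [hc.1]; field_simp
    simp [h]
  | 1 =>
    rw [if_neg (by lia), if_neg one_ne_zero]
    push_cast
    ring
  | n + 2 =>
    rw [if_pos (Nat.le_add_left 2 n), Nat.add_sub_cancel, if_neg (by lia)]
    push_cast
    linear_combination hc.mul_coeff_add_four n

theorem eulerDerivation_clearedY (hc : WeierstrassRec a b c) :
    2 * eulerDerivation K (clearedY c) = 3 * clearedY c + 3 * clearedX c ^ 2 + C a * X ^ 2 := by
  simp only [clearedY, clearedX, map_sub, map_add, map_nsmul, Derivation.map_one_eq_zero,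
    eulerDerivation_X_pow_mul, zero_add]
  linear_combination X ^ 2 * hc.eulerDerivation_weierstrassTail

theorem coeff_three_defect (hc : WeierstrassRec a b c) :
    coeff 3 (clearedY c ^ 2 - (clearedX c ^ 3 + C a * X ^ 2 * clearedX c + C b * X ^ 3)) = 0 := by
  have h : 7 * c 3 = -b := by rw [hc.2.1]; field_simp
  set u := weierstrassTail c
  set v := eulerDerivation K u + u with hv
  have hX : clearedX c = 1 + X ^ 2 * u := rfl
  have hY : clearedY c = -1 + X ^ 2 * v := clearedY_eq c
  have hdefect : clearedY c ^ 2 - (clearedX c ^ 3 + C a * X ^ 2 * clearedX c + C b * X ^ 3) =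
      X ^ 2 * -(2 • v + 3 • u + C a + C b * X) +
        X ^ 4 * (v ^ 2 - 3 * u ^ 2 - X ^ 2 * u ^ 3 - C a * u) := by
    rw [hX, hY]
    ring
  have hu₁ : coeff 1 u = c 3 := coeff_weierstrassTail c 1
  have hv₁ : coeff 1 v = 2 * c 3 := by
    rw [hv, map_add, coeff_eulerDerivation, hu₁]
    ring
  rw [hdefect, map_add, coeff_X_pow_mul _ 2 1, coeff_X_pow_mul', if_neg (by lia), add_zero]
  simp only [map_neg, map_add, map_nsmul, hu₁, hv₁, coeff_C_mul, coeff_one_X, coeff_C,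
    if_neg one_ne_zero]
  linear_combination -h

theorem clearedY_sq (hc : WeierstrassRec a b c) :
    clearedY c ^ 2 = clearedX c ^ 3 + C a * X ^ 2 * clearedX c + C b * X ^ 3 :=
  sub_eq_zero.mp <| eq_zero_of_eulerDerivation_eq_nsmul
    (derivation_weierstrass_defect (eulerDerivation K) (eulerDerivation_C a) (eulerDerivation_C b)
      eulerDerivation_X (eulerDerivation_clearedX c) hc.eulerDerivation_clearedY)
    hc.coeff_three_defect

end WeierstrassRec

theorem laurentSeries_eq_single_mul_expand {R : Type*} [CommRing R] {d : ℕ} (hd : d ≠ 0) {e : ℤ}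
    {x : LaurentSeries R} {f : R⟦X⟧} (hf : ∀ n : ℕ, x.coeff (d * n + e) = coeff n f)
    (hx : ∀ k : ℤ, (∀ n : ℕ, k ≠ d * n + e) → x.coeff k = 0) :
    x = HahnSeries.single e 1 * (expand d hd f : LaurentSeries R) := by
  ext k
  rw [HahnSeries.coeff_single_mul, one_mul]
  by_cases hk : ∃ n : ℕ, k = d * n + e
  · obtain ⟨n, rfl⟩ := hk
    rw [hf, add_sub_cancel_right, ← Nat.cast_mul, LaurentSeries.coeff_coe_powerSeries,
      coeff_expand_mul]
  · push Not at hk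
    rw [hx k hk, PowerSeries.coeff_coe]
    split_ifs with hneg
    · rfl
    · refine (coeff_expand_of_not_dvd d hd f fun ⟨n, hn⟩ ↦ hk n ?_).symm
      zify at hn
      grind

section LaurentSeries

variable {K : Type*} [Field K] {c : ℕ → K}

theorem IsWeierstrassX.eq_single_mul_expand {X : LaurentSeries K} (hX : IsWeierstrassX c X) :
    X = HahnSeries.single (-2) 1 * (expand 2 two_ne_zero (clearedX c) : LaurentSeries K) := by
  obtain ⟨hpole, hcoeff, hzero⟩ := hX
  refine laurentSeries_eq_single_mul_expand two_ne_zero (fun n ↦ ?_) fun k hk ↦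
    hzero k (by simpa using hk 0) fun l _ ↦ hk l
  match n with
  | 0 => simpa [coeff_zero_clearedX] using hpole
  | 1 =>
    rw [coeff_one_clearedX]
    exact hzero _ (by simp) (by grind)
  | n + 2 =>
    rw [coeff_add_two_clearedX]
    exact hcoeff (n + 2) (by lia)

theorem IsWeierstrassY.eq_single_mul_expand {Y : LaurentSeries K} (hY : IsWeierstrassY c Y) :
    Y = HahnSeries.single (-3) 1 * (expand 2 two_ne_zero (clearedY c) : LaurentSeries K) := by
  obtain ⟨hpole, hcoeff, hzero⟩ := hY
  refine laurentSeries_eq_single_mul_expand two_ne_zero (fun n ↦ ?_) fun k hk ↦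
    hzero k (by simpa using hk 0) fun l _ ↦ hk l
  rw [coeff_clearedY]
  match n with
  | 0 => simpa [coeff_zero_clearedX] using hpole
  | 1 =>
    rw [coeff_one_clearedX, mul_zero]
    exact hzero _ (by simp) (by grind)
  | n + 2 =>
    rw [coeff_add_two_clearedX]
    exact hcoeff (n + 2) (by lia)

end LaurentSeries

/-- In `K((z))`, the series `X` and `Y` built from the Weierstrass recurrence satisfy
the short Weierstrass equation `Y² = X³ + a·X + b`. -/
theorem weierstrass_series_satisfy_curve_equation
    {K : Type*} [Field K] [CharZero K] (a b : K) (c : ℕ → K)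
    (hc : WeierstrassRec a b c) (X Y : LaurentSeries K)
    (hX : IsWeierstrassX c X) (hY : IsWeierstrassY c Y) :
    Y ^ 2 = X ^ 3 + HahnSeries.C a * X + HahnSeries.C b := by
  have hcurve := congrArg (fun f : K⟦X⟧ ↦ (expand 2 two_ne_zero f : LaurentSeries K)) hc.clearedY_sq
  simp only [map_add, map_mul, map_pow, expand_C, expand_X, PowerSeries.coe_C, PowerSeries.coe_X]
    at hcurve
  have hz : (HahnSeries.single 1 1 : LaurentSeries K) ≠ 0 := HahnSeries.single_ne_zero one_ne_zero
  rw [hX.eq_single_mul_expand, hY.eq_single_mul_expand, RatFunc.single_zpow (-2),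
    RatFunc.single_zpow (-3)]
  field_simp
  linear_combination hcurve
end

section
/- In K((z)), the Laurent series Y(z) is nonzero, and the series -X(z)/Y(z) equals z - (2a/5)·z^5 - (3b/7)·z^7 + O(z^9); precisely, for every integer n with 0 ≤ n ≤ 8, the coefficient of z^n in -X(z)/Y(z) is 1 if n = 1, is -2a/5 if n = 5, is -3b/7 if n = 7, and is 0 otherwise, and all coefficients of -X(z)/Y(z) in negative degrees vanish. -/
/-!
Put `X₀ = z⁻² + c₂ z² + c₃ z⁴`, `Y₀ = -z⁻³ + c₂ z + 2 c₃ z³` and `P = z + 2 c₂ z⁵ + 3 c₃ z⁷`.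
Then `X = X₀ + O(z⁶)`, `Y = Y₀ + O(z⁵)` and `-X₀ = P Y₀ + O(z⁶)`. As `P = O(z)`, this gives
`-X = P Y + O(z⁶)`, and dividing by `Y`, which has order `-3`, gives `-X / Y = P + O(z⁹)`.
-/

open HahnSeries

section Truncation

variable {Γ R : Type*} [LinearOrder Γ] [AddCommGroup R]

theorem le_orderTop_sub_sum_single (f : HahnSeries Γ R) (s : Finset Γ) (n : Γ)
    (hs : ∀ i < n, i ∉ s → f.coeff i = 0) :
    n ≤ (f - ∑ i ∈ s, single i (f.coeff i)).orderTop := by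
  refine le_orderTop_iff_forall.mpr fun j hj => ?_
  by_cases hjs : j ∈ s
  · rw [coeff_sub, coeff_sum, Finset.sum_eq_single_of_mem j hjs fun i _ hij =>
      coeff_single_of_ne hij.symm, coeff_single_same, sub_self]
  · rw [coeff_sub, coeff_sum, Finset.sum_eq_zero fun i hi =>
      coeff_single_of_ne (ne_of_mem_of_not_mem hi hjs).symm, sub_zero,
      hs j (WithTop.coe_lt_coe.mp hj) hjs]

end Truncation

theorem le_orderTop_div_sub_iff {Γ K : Type*} [AddCommGroup Γ] [LinearOrder Γ]
    [IsOrderedAddMonoid Γ] [Field K] {f g p : HahnSeries Γ K} {n : WithTop Γ} (hg : g ≠ 0) :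
    n ≤ (f / g - p).orderTop ↔ n + g.orderTop ≤ (f - p * g).orderTop := by
  have hfactor : f - p * g = (f / g - p) * g := by rw [sub_mul, div_mul_cancel₀ _ hg]
  rw [hfactor, orderTop_mul, WithTop.add_le_add_iff_right (orderTop_ne_top.mpr hg)]

section QuotientTrunc

variable {R : Type*}

/-- The polynomial `z + 2 u z⁵ + 3 v z⁷`, which for `u = c₂` and `v = c₃` is the expansion of
`-X / Y` up to `O(z⁹)`. -/
noncomputable def quotientTrunc [Semiring R] (u v : R) : LaurentSeries R :=
  single 1 1 + single 5 (2 * u) + single 7 (3 * v)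

theorem coeff_quotientTrunc [Semiring R] (u v : R) (n : ℤ) :
    (quotientTrunc u v).coeff n =
      if n = 1 then 1 else if n = 5 then 2 * u else if n = 7 then 3 * v else 0 := by
  simp only [quotientTrunc, coeff_add, coeff_single]
  split_ifs <;> first | omega | simp

theorem one_le_orderTop_quotientTrunc [Semiring R] (u v : R) :
    1 ≤ (quotientTrunc u v).orderTop := by
  refine le_orderTop_iff_forall.mpr fun n hn => ?_
  have hn' : n < 1 := WithTop.coe_lt_coe.mp hn
  rw [coeff_quotientTrunc, if_neg (by omega), if_neg (by omega), if_neg (by omega)]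

theorem six_le_orderTop_quotientTrunc_mul_add [Ring R] (u v : R) :
    6 ≤ (quotientTrunc u v * (single (-3) (-1) + single 1 u + single 3 (2 * v)) +
      (single (-2) 1 + single 2 u + single 4 v)).orderTop := by
  refine le_orderTop_iff_forall.mpr fun n hn => ?_
  have hn' : n < 6 := WithTop.coe_lt_coe.mp hn
  simp only [quotientTrunc, mul_add, add_mul, single_mul_single, coeff_add, coeff_single,
    Int.reduceAdd]
  split_ifs <;> grind

end QuotientTrunc

section Weierstrass

variable {K : Type*} [Field K] {c : ℕ → K} {X Y : LaurentSeries K}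

theorem IsWeierstrassX.six_le_orderTop_sub (hX : IsWeierstrassX c X) :
    6 ≤ (X - (single (-2) 1 + single 2 (c 2) + single 4 (c 3))).orderTop := by
  obtain ⟨hpole, hcoeff, hzero⟩ := hX
  have h2 : X.coeff 2 = c 2 := by simpa using hcoeff 2 le_rfl
  have h4 : X.coeff 4 = c 3 := by simpa using hcoeff 3 (by norm_num)
  have htrunc := le_orderTop_sub_sum_single X {-2, 2, 4} 6 fun n hn hns => by
    simp only [Finset.mem_insert, Finset.mem_singleton] at hns
    exact hzero n (by omega) fun l hl => by omega
  simpa [hpole, h2, h4, add_assoc] using htrunc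

theorem IsWeierstrassY.five_le_orderTop_sub (hY : IsWeierstrassY c Y) :
    5 ≤ (Y - (single (-3) (-1) + single 1 (c 2) + single 3 (2 * c 3))).orderTop := by
  obtain ⟨hpole, hcoeff, hzero⟩ := hY
  have h1 : Y.coeff 1 = c 2 := by
    simpa [show (2 : K) - 1 = 1 by norm_num] using hcoeff 2 le_rfl
  have h3 : Y.coeff 3 = 2 * c 3 := by
    simpa [show (3 : K) - 1 = 2 by norm_num] using hcoeff 3 (by norm_num)
  have htrunc := le_orderTop_sub_sum_single Y {-3, 1, 3} 5 fun n hn hns => by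
    simp only [Finset.mem_insert, Finset.mem_singleton] at hns
    exact hzero n (by omega) fun l hl => by omega
  simpa [hpole, h1, h3, add_assoc] using htrunc

theorem IsWeierstrassY.orderTop_eq (hY : IsWeierstrassY c Y) : Y.orderTop = (-3 : ℤ) := by
  obtain ⟨hpole, -, hzero⟩ := hY
  refine le_antisymm (orderTop_le_of_coeff_ne_zero (by simp [hpole])) ?_
  refine le_orderTop_iff_forall.mpr fun n hn => ?_
  rw [WithTop.coe_lt_coe] at hn
  exact hzero n (by omega) fun l hl => by omega

theorem IsWeierstrassY.ne_zero (hY : IsWeierstrassY c Y) : Y ≠ 0 :=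
  orderTop_ne_top.mp (by simp [hY.orderTop_eq])

theorem six_le_orderTop_neg_sub_quotientTrunc_mul (hX : IsWeierstrassX c X)
    (hY : IsWeierstrassY c Y) : 6 ≤ (-X - quotientTrunc (c 2) (c 3) * Y).orderTop := by
  set P := quotientTrunc (c 2) (c 3)
  set X₀ : LaurentSeries K := single (-2) 1 + single 2 (c 2) + single 4 (c 3)
  set Y₀ : LaurentSeries K := single (-3) (-1) + single 1 (c 2) + single 3 (2 * c 3)
  have hX_err : 6 ≤ (X - X₀).orderTop := hX.six_le_orderTop_sub
  have hY_err : 1 + 5 ≤ (P * (Y - Y₀)).orderTop :=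
    (add_le_add (one_le_orderTop_quotientTrunc _ _) hY.five_le_orderTop_sub).trans
      orderTop_add_le_mul
  have hP_err : 6 ≤ (P * Y₀ + X₀).orderTop := six_le_orderTop_quotientTrunc_mul_add _ _
  have hdecomp : -X - P * Y = -((X - X₀) + P * (Y - Y₀) + (P * Y₀ + X₀)) := by ring
  rw [hdecomp, orderTop_neg]
  exact (le_min ((le_min hX_err hY_err).trans min_orderTop_le_orderTop_add) hP_err).trans
    min_orderTop_le_orderTop_add

theorem nine_le_orderTop_neg_div_sub_quotientTrunc (hX : IsWeierstrassX c X)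
    (hY : IsWeierstrassY c Y) : 9 ≤ (-X / Y - quotientTrunc (c 2) (c 3)).orderTop := by
  refine (le_orderTop_div_sub_iff hY.ne_zero).mpr ?_
  rw [hY.orderTop_eq]
  exact six_le_orderTop_neg_sub_quotientTrunc_mul hX hY

end Weierstrass

theorem neg_X_div_Y_series_expansion_general
    {K : Type*} [Field K] (c : ℕ → K) (X Y : LaurentSeries K)
    (hX : IsWeierstrassX c X) (hY : IsWeierstrassY c Y) :
    Y ≠ 0 ∧ ∀ n : ℤ, n ≤ 8 →
      (-X / Y).coeff n =
        if n = 1 then 1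
        else if n = 5 then 2 * c 2
        else if n = 7 then 3 * c 3
        else 0 := by
  refine ⟨hY.ne_zero, fun n hn => ?_⟩
  have herr : (-X / Y - quotientTrunc (c 2) (c 3)).coeff n = 0 :=
    le_orderTop_iff_forall.mp (nine_le_orderTop_neg_div_sub_quotientTrunc hX hY) n
      (WithTop.coe_lt_coe.mpr (Int.lt_add_one_of_le hn))
  rw [← coeff_quotientTrunc, ← sub_eq_zero, ← coeff_sub, herr]

/-- In `K((z))`, `Y ≠ 0` and `-X/Y = z - (2a/5)·z⁵ - (3b/7)·z⁷ + O(z⁹)`: every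
coefficient of `-X/Y` in degree `n ≤ 8` is `1` at `n = 1`, `-2a/5` at `n = 5`,
`-3b/7` at `n = 7`, and `0` otherwise (in particular all coefficients in negative
degrees vanish). -/
theorem neg_X_div_Y_series_expansion
    {K : Type*} [Field K] [CharZero K] (a b : K) (c : ℕ → K)
    (hc : WeierstrassRec a b c) (X Y : LaurentSeries K)
    (hX : IsWeierstrassX c X) (hY : IsWeierstrassY c Y) :
    Y ≠ 0 ∧ ∀ n : ℤ, n ≤ 8 →
      (-X / Y).coeff n =
        if n = 1 then 1
        else if n = 5 then -(2 * a / 5)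
        else if n = 7 then -(3 * b / 7)
        else 0 := by
  simpa only [hc.1, hc.2.1, mul_div_assoc', mul_neg, neg_div] using
    neg_X_div_Y_series_expansion_general c X Y hX hY
end

section
/- For an odd prime p, elements a, b of the p-adic integers ℤ_p, and the sequence c : ℕ → ℚ_p defined by the Weierstrass recurrence, for every z ∈ ℚ_p with ‖z‖_p ≤ 1/p the sequences l ↦ c_l·z^{2l-2} and l ↦ (l-1)·c_l·z^{2l-3} both tend to 0 in ℚ_p as l → ∞; in particular, the series Σ_{l≥2} c_l·z^{2l-2} and Σ_{l≥2} (l-1)·c_l·z^{2l-3} (the expansions of ℘(z) and (1/2)℘′(z) minus their principal parts) are summable in ℚ_p. -/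
/-!
Every `c l` is a sum of products of `a` and `b`, with denominators collected from the factors
`2 l + 1` and `l - 3` of the recurrence, so the convergence question is how negative the valuation
of `c l` can get. An exponent `D` with `-v (c l) ≤ D l` propagates through the recurrence as soon as
`D s + D t + v (2 l + 1) + v (l - 3) ≤ D l + v 3` whenever `s + t = l` and `s, t ≥ 2`. The factor
`l - 3` is paid for by `v ((l - 3)!)`. The factor `2 l + 1` is paid for by
`v ((4 l + 2)! / lcm (1, …, 4 l + 2)) = ∑ₖ (⌊(4 l + 2) / p ^ k⌋ - 1)`, summed over
`k ≥ 1` with `p ^ k ≤ 4 l + 2`: when `p ^ k ∣ 2 l + 1`, the doubled number `4 l + 2` is an even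
multiple of `p ^ k`, which leaves room for the extra unit.
For `p = 3` this sum is too large, but the numerator `3` allows one to drop its term `k = 1`.
The resulting `D` is at most `3 l / 2`, which is beaten by the exponent `2 l` of `z`.
-/

open Filter Finset Topology
open scoped Nat

/-- The exponent of `p` in `n! / lcm (1, …, n)` by Legendre's formula, except that powers
`p ^ k ≤ 3` are ignored; for an odd prime `p` this omits `k = 0` and, if `p = 3`, also `k = 1`.
It controls the denominators `2 l + 1` in the Weierstrass recurrence, with `n = 4 l + 2`. -/
def lcmExcess (p n : ℕ) : ℕ :=
  ∑ k ∈ range n with 3 < p ^ k, (n / p ^ k - 1)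

lemma lcmExcess_eq_sum_range {p n b : ℕ} (hp : 1 < p) (hnb : n ≤ b) :
    lcmExcess p n = ∑ k ∈ range b with 3 < p ^ k, (n / p ^ k - 1) := by
  refine sum_subset (filter_subset_filter _ (range_subset_range.2 hnb)) fun k hk hkn => ?_
  have hnk : n ≤ k := by
    by_contra! hlt
    exact hkn (mem_filter.2 ⟨mem_range.2 hlt, (mem_filter.1 hk).2⟩)
  rw [Nat.div_eq_of_lt (hnk.trans_lt (Nat.lt_pow_self hp)), zero_tsub]

lemma lcmExcess_le {p : ℕ} (hp : 1 < p) (hodd : Odd p) (n : ℕ) : lcmExcess p n ≤ n / 4 := by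
  have le_sum {s : Finset ℕ} (hs : ∀ k, 3 < p ^ k → k < n → k ∈ s) :
      lcmExcess p n ≤ ∑ k ∈ s, n / p ^ k :=
    (sum_le_sum fun _ _ => Nat.sub_le _ 1).trans <| sum_le_sum_of_subset fun k hk => by
      rw [mem_filter, mem_range] at hk
      exact hs k hk.2 hk.1
  obtain rfl | hp5 : p = 3 ∨ 5 ≤ p := by
    obtain ⟨m, rfl⟩ := hodd
    lia
  · calc lcmExcess 3 n ≤ ∑ k ∈ Ico (1 + 1) (n + 1), n / 3 ^ k := by
          refine le_sum fun k hk hkn => mem_Ico.2 ⟨?_, by lia⟩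
          by_contra! hk1
          interval_cases k <;> simp at hk
      _ = ∑ k ∈ Ico 1 n, n / 3 / 3 ^ k := by
          simp only [← sum_Ico_add' _ 1 n 1, pow_succ', Nat.div_div_eq_div_mul]
      _ ≤ n / 3 / (3 - 1) := Nat.geom_sum_Ico_le (by norm_num) _ _
      _ ≤ n / 4 := by lia
  · calc lcmExcess p n ≤ ∑ k ∈ Ico 1 n, n / p ^ k := by
          refine le_sum fun k hk hkn => mem_Ico.2 ⟨Nat.one_le_iff_ne_zero.2 ?_, hkn⟩
          rintro rfl
          simp at hk
      _ ≤ n / (p - 1) := Nat.geom_sum_Ico_le hp _ _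
      _ ≤ n / 4 := Nat.div_le_div_left (by lia) (by norm_num)

lemma div_sub_one_add_div_sub_one_add_le {q m n N : ℕ} (hq : 3 ≤ q) (hm : 3 ≤ m) (hn : 3 ≤ n)
    (hmn : m + n = 2 * N + 2) :
    (m / q - 1) + (n / q - 1) + (if q ∣ N then 1 else 0) ≤ 2 * N / q - 1 := by
  have hq0 : 0 < q := by lia
  have hsum : (m / q + n / q) * q ≤ 2 * N + 2 := by
    rw [add_mul, ← hmn]
    exact add_le_add (Nat.div_mul_le_self m q) (Nat.div_mul_le_self n q)
  split_ifs with hqN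
  · obtain ⟨j, rfl⟩ := hqN
    have hmj : m / q < 2 * j := (Nat.div_lt_iff_lt_mul hq0).2 (by lia)
    have hnj : n / q < 2 * j := (Nat.div_lt_iff_lt_mul hq0).2 (by lia)
    have hmnj : m / q + n / q < 2 * j + 1 := by
      refine lt_of_mul_lt_mul_right (a := q) ?_ q.zero_le
      linarith
    rw [mul_left_comm, Nat.mul_div_cancel_left _ hq0]
    lia
  · have hmN : m / q ≤ 2 * N / q := Nat.div_le_div_right (by lia)
    have hnN : n / q ≤ 2 * N / q := Nat.div_le_div_right (by lia)
    have hmnN : m / q + n / q - 1 ≤ 2 * N / q := by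
      rw [Nat.le_div_iff_mul_le hq0, Nat.sub_mul]
      lia
    lia

lemma lcmExcess_add_lcmExcess_add_card_le {p m n N : ℕ} (hp : 1 < p) (hm : 3 ≤ m) (hn : 3 ≤ n)
    (hmn : m + n = 2 * N + 2) :
    lcmExcess p m + lcmExcess p n + #{k ∈ range (2 * N) | 3 < p ^ k ∧ p ^ k ∣ N} ≤
      lcmExcess p (2 * N) := by
  rw [lcmExcess_eq_sum_range hp (show m ≤ 2 * N by lia),
    lcmExcess_eq_sum_range hp (show n ≤ 2 * N by lia), ← filter_filter, card_filter,
    ← sum_add_distrib, ← sum_add_distrib]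
  exact sum_le_sum fun k hk =>
    div_sub_one_add_div_sub_one_add_le (mem_filter.1 hk).2.le hm hn hmn

lemma padicValNat_le_padicValNat_gcd_three_add_card {p N b : ℕ} [hp : Fact p.Prime] (hodd : Odd p)
    (hN : N ≠ 0) (hNb : N ≤ b) :
    padicValNat p N ≤
      padicValNat p (Nat.gcd 3 N) + #{k ∈ range b | 3 < p ^ k ∧ p ^ k ∣ N} := by
  rw [← Nat.sub_le_iff_le_add', ← Nat.add_sub_add_right _ 1, ← Nat.card_Ico]
  refine card_le_card fun k hk => ?_
  obtain ⟨hgcd_lt, hkN⟩ : padicValNat p (Nat.gcd 3 N) < k ∧ k ≤ padicValNat p N := by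
    rw [mem_Ico] at hk
    lia
  have hdvd : p ^ k ∣ N := (padicValNat_dvd_iff_le hN).2 hkN
  have hlt : k < b :=
    (Nat.lt_pow_self hp.out.one_lt).trans_le ((Nat.le_of_dvd hN.bot_lt hdvd).trans hNb)
  refine mem_filter.2 ⟨mem_range.2 hlt, ?_, hdvd⟩
  by_contra! hle
  have heq : p ^ k = 3 := by
    have hgt : 1 < p ^ k := Nat.one_lt_pow (by lia) hp.out.one_lt
    obtain ⟨j, hj⟩ : Odd (p ^ k) := hodd.pow
    lia
  have hgcd : p ^ k ∣ Nat.gcd 3 N := Nat.dvd_gcd heq.dvd hdvd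
  exact hgcd_lt.not_ge ((padicValNat_dvd_iff_le (Nat.gcd_ne_zero_right hN)).1 hgcd)

lemma lcmExcess_add_lcmExcess_add_padicValNat_le {p m n N : ℕ} [hp : Fact p.Prime] (hodd : Odd p)
    (hm : 3 ≤ m) (hn : 3 ≤ n) (hmn : m + n = 2 * N + 2) :
    lcmExcess p m + lcmExcess p n + padicValNat p N ≤
      lcmExcess p (2 * N) + padicValNat p (Nat.gcd 3 N) := by
  have hcard := lcmExcess_add_lcmExcess_add_card_le hp.out.one_lt hm hn hmn
  have hval := padicValNat_le_padicValNat_gcd_three_add_card hodd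
    (show N ≠ 0 by lia) (show N ≤ 2 * N by lia)
  lia

lemma padicValNat_le_of_dvd {p m n : ℕ} [Fact p.Prime] (hn : n ≠ 0) (hmn : m ∣ n) :
    padicValNat p m ≤ padicValNat p n :=
  (padicValNat_dvd_iff_le hn).1 (pow_padicValNat_dvd.trans hmn)

lemma padicValNat_factorial_add_factorial_add_succ_le (p : ℕ) [Fact p.Prime] {i j n : ℕ}
    (hij : i + j ≤ n) :
    padicValNat p i ! + padicValNat p j ! + padicValNat p (n + 1) ≤ padicValNat p (n + 1)! := by
  have hdvd : i ! * j ! ∣ n ! :=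
    (Nat.factorial_mul_factorial_dvd_factorial_add i j).trans (Nat.factorial_dvd_factorial hij)
  have hle := padicValNat_le_of_dvd (p := p) n.factorial_ne_zero hdvd
  rw [padicValNat.mul i.factorial_ne_zero j.factorial_ne_zero] at hle
  rw [Nat.factorial_succ, padicValNat.mul n.succ_ne_zero n.factorial_ne_zero]
  lia

/-- The exponent `D` bounding the denominators of the Weierstrass coefficients:
`‖c l‖ ≤ p ^ D l` for `l ≥ 2`. The truncated subtraction `l - 3` is harmless, as `0! = 1! = 1`. -/
def weierstrassExponent (p l : ℕ) : ℕ :=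
  lcmExcess p (4 * l + 2) + padicValNat p (l - 3)!

lemma weierstrassExponent_add_le {p s t : ℕ} [Fact p.Prime] (hodd : Odd p)
    (hs : 2 ≤ s) (ht : 2 ≤ t) :
    weierstrassExponent p s + weierstrassExponent p t +
        padicValNat p (2 * (s + t) + 1) + padicValNat p (s + t - 3) ≤
      weierstrassExponent p (s + t) + padicValNat p 3 := by
  have hlcm := lcmExcess_add_lcmExcess_add_padicValNat_le (m := 4 * s + 2) (n := 4 * t + 2)
    (N := 2 * (s + t) + 1) hodd (by lia) (by lia) (by lia)
  have hgcd : padicValNat p (Nat.gcd 3 (2 * (s + t) + 1)) ≤ padicValNat p 3 :=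
    padicValNat_le_of_dvd three_ne_zero (Nat.gcd_dvd_left _ _)
  have hfact := padicValNat_factorial_add_factorial_add_succ_le p
    (show (s - 3) + (t - 3) ≤ s + t - 4 by lia)
  rw [show s + t - 4 + 1 = s + t - 3 by lia] at hfact
  rw [show 2 * (2 * (s + t) + 1) = 4 * (s + t) + 2 by ring] at hlcm
  unfold weierstrassExponent
  lia

lemma padicValNat_le_weierstrassExponent {p l : ℕ} [Fact p.Prime] (hodd : Odd p) (hl : 2 ≤ l)
    (hcop : Nat.Coprime 3 (2 * l + 1)) :
    padicValNat p (2 * l + 1) ≤ weierstrassExponent p l := by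
  have hlcm := lcmExcess_add_lcmExcess_add_padicValNat_le (m := 3) (n := 4 * l + 1)
    (N := 2 * l + 1) hodd le_rfl (by lia) (by lia)
  rw [hcop.gcd_eq_one, padicValNat_one_right,
    show 2 * (2 * l + 1) = 4 * l + 2 by ring] at hlcm
  unfold weierstrassExponent
  lia

lemma two_mul_weierstrassExponent_le {p : ℕ} [hp : Fact p.Prime] (hodd : Odd p) (l : ℕ) :
    2 * weierstrassExponent p l ≤ 3 * l := by
  have hlcm := lcmExcess_le hp.out.one_lt hodd (4 * l + 2)
  have hfact : 2 * padicValNat p (l - 3)! ≤ l - 3 := by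
    have hp3 : 2 ≤ p - 1 := by
      have := hp.out.two_le
      obtain ⟨m, rfl⟩ := hodd
      lia
    calc 2 * padicValNat p (l - 3)! ≤ (p - 1) * padicValNat p (l - 3)! := by gcongr
      _ ≤ l - 3 := by
        rw [sub_one_mul_padicValNat_factorial]
        exact Nat.sub_le _ _
  unfold weierstrassExponent
  lia

lemma norm_le_of_convolution_recurrence {R : Type*} [SeminormedRing R] [IsUltrametricDist R]
    {c u : ℕ → R} {M : ℕ → ℝ} (h2 : ‖c 2‖ ≤ M 2) (h3 : ‖c 3‖ ≤ M 3)
    (hrec : ∀ l, 4 ≤ l → c l = u l * ∑ s ∈ Icc 2 (l - 2), c s * c (l - s))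
    (hM : ∀ s t, 2 ≤ s → 2 ≤ t → ‖u (s + t)‖ * (M s * M t) ≤ M (s + t)) {l : ℕ} (hl : 2 ≤ l) :
    ‖c l‖ ≤ M l := by
  induction l using Nat.strong_induction_on with
  | _ l ih =>
    obtain rfl | rfl | hl4 : l = 2 ∨ l = 3 ∨ 4 ≤ l := by lia
    · exact h2
    · exact h3
    rw [hrec l hl4, mul_sum]
    refine IsUltrametricDist.norm_sum_le_of_forall_le_of_nonempty
      (nonempty_Icc.2 (by lia)) fun s hs => ?_
    rw [mem_Icc] at hs
    obtain ⟨t, rfl⟩ := Nat.exists_eq_add_of_le (show s ≤ l by lia)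
    rw [Nat.add_sub_cancel_left]
    have hcs := ih s (by lia) (by lia)
    have hct := ih t (by lia) (by lia)
    calc ‖u (s + t) * (c s * c t)‖ ≤ ‖u (s + t)‖ * (‖c s‖ * ‖c t‖) :=
          (norm_mul_le _ _).trans (by gcongr; exact norm_mul_le _ _)
      _ ≤ ‖u (s + t)‖ * (M s * M t) := by
          have := (norm_nonneg _).trans hcs
          gcongr
      _ ≤ M (s + t) := hM s t (by lia) (by lia)

lemma tendsto_mul_zpow_two_mul_sub {K : Type*} [NormedDivisionRing K] {c : ℕ → K} {ρ : ℝ} {z : K}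
    (hc : ∀ᶠ l in atTop, ‖c l‖ ≤ ρ ^ l) (hρ : 0 ≤ ρ) (hz : ρ * ‖z‖ ^ 2 < 1) (k : ℤ) :
    Tendsto (fun l : ℕ => c l * z ^ (2 * (l : ℤ) - k)) atTop (𝓝 0) := by
  obtain rfl | hz0 := eq_or_ne z 0
  · refine tendsto_const_nhds.congr' ?_
    filter_upwards [eventually_gt_atTop k.toNat] with l hl
    rw [zero_zpow _ (by lia), mul_zero]
  have hgeom : Tendsto (fun l : ℕ => (ρ * ‖z‖ ^ 2) ^ l) atTop (𝓝 0) :=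
    tendsto_pow_atTop_nhds_zero_of_lt_one (by positivity) hz
  have hpow : Tendsto (fun l => c l * (z ^ 2) ^ l) atTop (𝓝 0) := by
    refine squeeze_zero_norm' ?_ hgeom
    filter_upwards [hc] with l hl
    rw [norm_mul, norm_pow, norm_pow, mul_pow]
    gcongr
  have hshift (l : ℕ) : c l * z ^ (2 * (l : ℤ) - k) = c l * (z ^ 2) ^ l / z ^ k := by
    rw [zpow_sub₀ hz0, zpow_mul, zpow_natCast, zpow_ofNat, mul_div_assoc]
  simpa only [hshift, zero_div] using hpow.div_const (z ^ k)

lemma summable_comp_add_of_tendsto_zero {G : Type*} [NormedAddCommGroup G] [IsUltrametricDist G]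
    [CompleteSpace G] {f : ℕ → G} (hf : Tendsto f atTop (𝓝 0)) (k : ℕ) :
    Summable fun l => f (l + k) := by
  refine NonarchimedeanAddGroup.summable_of_tendsto_cofinite_zero ?_
  rw [Nat.cofinite_eq_atTop]
  exact hf.comp (tendsto_add_atTop_nat k)

/-- The Laurent coefficients of the Weierstrass function with parameters `a = -5 c 2` and
`b = -7 c 3`: `℘ z = z⁻² + ∑_{l ≥ 2} c l * z ^ (2 l - 2)`. The values `c 0` and `c 1` are free. -/
structure IsWeierstrassSeq {K : Type*} [Field K] (a b : K) (c : ℕ → K) : Prop where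
  two : c 2 = -a / 5
  three : c 3 = -b / 7
  recurrence : ∀ l : ℕ, 4 ≤ l →
    c l = 3 / ((2 * (l : K) + 1) * ((l : K) - 3)) * ∑ s ∈ Icc 2 (l - 2), c s * c (l - s)

section NormedAlgebra

variable {p : ℕ} [hp : Fact p.Prime] {K : Type*} [NormedField K] [NormedAlgebra ℚ_[p] K]

variable (p K) in
lemma norm_natCast_eq_inv_pow_padicValNat {n : ℕ} (hn : n ≠ 0) :
    ‖(n : K)‖ = ((p : ℝ) ^ padicValNat p n)⁻¹ := by
  rw [← map_natCast (algebraMap ℚ_[p] K), norm_algebraMap',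
    Padic.norm_eq_zpow_neg_valuation (mod_cast hn), Padic.valuation_natCast, zpow_neg, zpow_natCast]

variable (p) in
lemma norm_three_div_eq {l : ℕ} (hl : 4 ≤ l) :
    ‖(3 : K) / ((2 * (l : K) + 1) * ((l : K) - 3))‖ =
      (p : ℝ) ^ (padicValNat p (2 * l + 1) + padicValNat p (l - 3)) / p ^ padicValNat p 3 := by
  have h3 : (3 : K) = (3 : ℕ) := by norm_cast
  have hodd : 2 * (l : K) + 1 = (2 * l + 1 : ℕ) := by push_cast; rfl
  have hsub : (l : K) - 3 = (l - 3 : ℕ) := by push_cast [show 3 ≤ l by lia]; rfl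
  rw [hodd, hsub, h3, norm_div, norm_mul,
    norm_natCast_eq_inv_pow_padicValNat p K three_ne_zero,
    norm_natCast_eq_inv_pow_padicValNat p K (2 * l).succ_ne_zero,
    norm_natCast_eq_inv_pow_padicValNat p K (show l - 3 ≠ 0 by lia),
    ← mul_inv, ← pow_add, div_inv_eq_mul, mul_comm, div_eq_mul_inv]

lemma norm_div_le_pow_weierstrassExponent (hodd : Odd p) {l : ℕ} (hl : 2 ≤ l)
    (hcop : Nat.Coprime 3 (2 * l + 1)) {x : K} (hx : ‖x‖ ≤ 1) :
    ‖x / (2 * l + 1 : ℕ)‖ ≤ (p : ℝ) ^ weierstrassExponent p l := by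
  have hp1 : (1 : ℝ) ≤ p := mod_cast hp.out.one_le
  rw [norm_div, norm_natCast_eq_inv_pow_padicValNat p K (2 * l).succ_ne_zero, div_inv_eq_mul]
  calc ‖x‖ * (p : ℝ) ^ padicValNat p (2 * l + 1) ≤ (p : ℝ) ^ padicValNat p (2 * l + 1) :=
        mul_le_of_le_one_left (by positivity) hx
    _ ≤ (p : ℝ) ^ weierstrassExponent p l :=
        pow_le_pow_right₀ hp1 (padicValNat_le_weierstrassExponent hodd hl hcop)

variable {a b : K} {c : ℕ → K}

lemma norm_le_pow_weierstrassExponent (hodd : Odd p) (hc : IsWeierstrassSeq a b c) (ha : ‖a‖ ≤ 1)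
    (hb : ‖b‖ ≤ 1) {l : ℕ} (hl : 2 ≤ l) :
    ‖c l‖ ≤ (p : ℝ) ^ weierstrassExponent p l := by
  have : IsUltrametricDist K := .of_normedAlgebra ℚ_[p]
  have hp1 : (1 : ℝ) ≤ p := mod_cast hp.out.one_le
  refine norm_le_of_convolution_recurrence (M := fun l => (p : ℝ) ^ weierstrassExponent p l)
    ?_ ?_ hc.recurrence (fun s t hs ht => ?_) hl
  · simpa [hc.two] using norm_div_le_pow_weierstrassExponent (l := 2) hodd le_rfl (by norm_num) ha
  · simpa [hc.three] using
      norm_div_le_pow_weierstrassExponent (l := 3) hodd (by norm_num) (by norm_num) hb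
  · rw [norm_three_div_eq p (by lia), div_mul_eq_mul_div, div_le_iff₀ (by positivity),
      ← pow_add, ← pow_add, ← pow_add]
    exact pow_le_pow_right₀ hp1 (by linarith [weierstrassExponent_add_le hodd hs ht])

lemma norm_le_sqrt_pow (hodd : Odd p) (hc : IsWeierstrassSeq a b c) (ha : ‖a‖ ≤ 1)
    (hb : ‖b‖ ≤ 1) {l : ℕ} (hl : 2 ≤ l) :
    ‖c l‖ ≤ (√p ^ 3) ^ l := by
  have hsqrt : 1 ≤ √(p : ℝ) := Real.one_le_sqrt.2 (mod_cast hp.out.one_le)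
  calc ‖c l‖ ≤ (p : ℝ) ^ weierstrassExponent p l :=
        norm_le_pow_weierstrassExponent hodd hc ha hb hl
    _ = √p ^ (2 * weierstrassExponent p l) := by rw [pow_mul, Real.sq_sqrt p.cast_nonneg]
    _ ≤ √p ^ (3 * l) := pow_le_pow_right₀ hsqrt (two_mul_weierstrassExponent_le hodd l)
    _ = (√p ^ 3) ^ l := pow_mul _ _ _

theorem weierstrass_series_summable_padic_general [CompleteSpace K] (hodd : Odd p)
    (hc : IsWeierstrassSeq a b c) (ha : ‖a‖ ≤ 1) (hb : ‖b‖ ≤ 1)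
    {z : K} (hz : (p : ℝ) ^ 3 * ‖z‖ ^ 4 < 1) :
    Tendsto (fun l : ℕ => c l * z ^ (2 * (l : ℤ) - 2)) atTop (𝓝 0) ∧
    Tendsto (fun l : ℕ => ((l : K) - 1) * c l * z ^ (2 * (l : ℤ) - 3)) atTop (𝓝 0) ∧
    Summable (fun l : ℕ => c (l + 2) * z ^ (2 * ((l : ℤ) + 2) - 2)) ∧
    Summable (fun l : ℕ => (((l : K) + 2) - 1) * c (l + 2) * z ^ (2 * ((l : ℤ) + 2) - 3)) := by
  have : IsUltrametricDist K := .of_normedAlgebra ℚ_[p]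
  have hzρ : √p ^ 3 * ‖z‖ ^ 2 < 1 := by
    refine (pow_lt_one_iff_of_nonneg (by positivity) two_ne_zero).1 ?_
    rwa [mul_pow, pow_right_comm, Real.sq_sqrt p.cast_nonneg, ← pow_mul]
  have hbound : ∀ᶠ l in atTop, ‖c l‖ ≤ (√p ^ 3) ^ l :=
    (eventually_ge_atTop 2).mono fun l hl => norm_le_sqrt_pow hodd hc ha hb hl
  have hbound' : ∀ᶠ l : ℕ in atTop, ‖((l : K) - 1) * c l‖ ≤ (√p ^ 3) ^ l := by
    refine hbound.mono fun l hl => ?_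
    have hl1 : ‖(l : K) - 1‖ ≤ 1 := by
      simpa using IsUltrametricDist.norm_intCast_le_one K ((l : ℤ) - 1)
    rw [norm_mul]
    exact (mul_le_of_le_one_left (norm_nonneg _) hl1).trans hl
  have hlim := tendsto_mul_zpow_two_mul_sub hbound (by positivity) hzρ 2
  have hlim' := tendsto_mul_zpow_two_mul_sub hbound' (by positivity) hzρ 3
  refine ⟨hlim, hlim', ?_, ?_⟩
  · simpa using summable_comp_add_of_tendsto_zero hlim 2
  · simpa using summable_comp_add_of_tendsto_zero hlim' 2

end NormedAlgebra

lemma pow_three_mul_pow_four_lt_one {x r : ℝ} (hx : 1 < x) (hr0 : 0 ≤ r) (hr : r ≤ 1 / x) :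
    x ^ 3 * r ^ 4 < 1 := by
  have hx0 : 0 < x := one_pos.trans hx
  calc x ^ 3 * r ^ 4 ≤ x ^ 3 * (1 / x) ^ 4 := by gcongr
    _ = 1 / x := by field_simp
    _ < 1 := (div_lt_one hx0).2 hx

/-- For an odd prime `p`, `a b ∈ ℤ_p`, and the sequence `c` given by the Weierstrass
recurrence, for every `z ∈ ℚ_p` with `‖z‖ ≤ 1/p` the sequences `l ↦ c l · z^(2l-2)`
and `l ↦ (l-1) · c l · z^(2l-3)` tend to `0`; in particular the series
`∑_{l ≥ 2} c l · z^(2l-2)` and `∑_{l ≥ 2} (l-1) · c l · z^(2l-3)` are summable in `ℚ_p`. -/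
theorem weierstrass_series_summable_padic
    (p : ℕ) [Fact p.Prime] (hp : Odd p) (a b : ℤ_[p]) (c : ℕ → ℚ_[p])
    (h2 : c 2 = -(a : ℚ_[p]) / 5) (h3 : c 3 = -(b : ℚ_[p]) / 7)
    (hrec : ∀ l : ℕ, 4 ≤ l →
      c l = 3 / ((2 * (l : ℚ_[p]) + 1) * ((l : ℚ_[p]) - 3)) *
        ∑ s ∈ Finset.Icc 2 (l - 2), c s * c (l - s))
    (z : ℚ_[p]) (hz : ‖z‖ ≤ 1 / p) :
    Filter.Tendsto (fun l : ℕ => c l * z ^ (2 * (l : ℤ) - 2)) Filter.atTop (nhds 0) ∧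
    Filter.Tendsto (fun l : ℕ => ((l : ℚ_[p]) - 1) * c l * z ^ (2 * (l : ℤ) - 3))
      Filter.atTop (nhds 0) ∧
    Summable (fun l : ℕ => c (l + 2) * z ^ (2 * ((l : ℤ) + 2) - 2)) ∧
    Summable (fun l : ℕ =>
      (((l : ℚ_[p]) + 2) - 1) * c (l + 2) * z ^ (2 * ((l : ℤ) + 2) - 3)) := by
  have hz' := pow_three_mul_pow_four_lt_one
    (mod_cast (Fact.out : p.Prime).one_lt) (norm_nonneg z) hz
  exact weierstrass_series_summable_padic_general
    hp ⟨h2, h3, hrec⟩ a.norm_le_one b.norm_le_one hz'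
end

section
/- For an odd prime p, elements a, b ∈ ℤ_p, and any nonzero z ∈ ℚ_p with ‖z‖_p ≤ 1/p, the p-adic values ℘(z) = z^{-2} + Σ_{l≥2} c_l·z^{2l-2} and D(z) = -z^{-3} + Σ_{l≥2} (l-1)·c_l·z^{2l-3} (defined via the convergent p-adic sums) satisfy the short Weierstrass equation D(z)^2 = ℘(z)^3 + a·℘(z) + b in ℚ_p; in other words, the point (℘(z), D(z)) lies on the elliptic curve y^2 = x^3 + a·x + b over ℚ_p. -/
/-!
The series `x = z² ℘` and `y = z³ D` are power series in `q = z²`, and the recursion for `c` is the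
differential equation `D' = 3 ℘² + a` coefficient by coefficient. The defect
`E = y² - x³ - a q² x - b q³` then satisfies `q dE/dq = 3 E`, so it is a multiple of `q³`, and the
value of `c 3` makes that multiple zero: the curve equation holds formally.

The denominators of `c` are controlled through the coordinates `t = ℘ / D` and `w = 1 / D` at
infinity. Their derivatives are polynomials in `t` and `w` with coefficients in `ℤ[a, b]`, so the
`n`-th coefficient of `t` is integral after multiplication by `n!`, and hence bounded by
`p ^ ((n - 1) / (p - 1))`. The equation `w = t³ + a t w² + b w³` carries bounds of this type from
`t` to `w / z³`, whose inverse is `y`, and then to `x = y t / z`. So both series converge where the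
`p`-adic exponential does, and there the formal identity may be evaluated.
-/

namespace PadicWeierstrass

open PowerSeries Finset
open scoped NNReal Nat

section PowerSeriesLemmas

variable {A : Type*} [CommRing A]

theorem coeff_X_mul_derivative (f : A⟦X⟧) (n : ℕ) : coeff n (X * d⁄dX A f) = n * coeff n f := by
  cases n with
  | zero => simp
  | succ n => rw [coeff_succ_X_mul, coeff_derivative, mul_comm]; push_cast; rfl

theorem X_mul_derivative_expand {m : ℕ} (hm : m ≠ 0) (f : A⟦X⟧) :
    X * d⁄dX A (expand m hm f) = (m : A⟦X⟧) * expand m hm (X * d⁄dX A f) := by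
  ext n
  rw [← map_natCast (C (R := A)), coeff_C_mul, coeff_X_mul_derivative, coeff_expand, coeff_expand]
  split_ifs with h
  · obtain ⟨k, rfl⟩ := h
    rw [Nat.mul_div_cancel_left _ hm.bot_lt, coeff_X_mul_derivative]
    push_cast
    ring
  · simp

theorem eq_zero_of_X_mul_derivative_eq [IsDomain A] [CharZero A] {f : A⟦X⟧} {k : ℕ}
    (hf : X * d⁄dX A f = (k : A⟦X⟧) * f) (hk : coeff k f = 0) : f = 0 := by
  ext n
  have hn := congrArg (coeff n) hf
  rw [coeff_X_mul_derivative, ← map_natCast (C (R := A)), coeff_C_mul] at hn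
  obtain rfl | hnk := eq_or_ne n k
  · simpa using hk
  · simpa [hnk] using hn

theorem coeff_three_mul_of_coeff_one_eq_zero {f g : A⟦X⟧} (hf : coeff 1 f = 0)
    (hg : coeff 1 g = 0) : coeff 3 (f * g) = coeff 0 f * coeff 3 g + coeff 3 f * coeff 0 g := by
  simp [coeff_mul, Nat.antidiagonal_succ, hf, hg]

theorem derivation_mem_adjoin {R B : Type*} [CommRing R] [CommRing B] [Algebra R B]
    (D : Derivation R B B) {s : Set B} (hs : ∀ f ∈ s, D f ∈ Algebra.adjoin R s) {f : B}
    (hf : f ∈ Algebra.adjoin R s) : D f ∈ Algebra.adjoin R s := by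
  induction hf using Algebra.adjoin_induction with
  | mem f hf => exact hs f hf
  | algebraMap r => rw [D.map_algebraMap]; exact zero_mem _
  | add f g _ _ hDf hDg => rw [map_add]; exact add_mem hDf hDg
  | mul f g hf hg hDf hDg =>
    rw [D.leibniz]
    exact add_mem (mul_mem hf hDg) (mul_mem hg hDf)

theorem constantCoeff_mem_bot_of_mem_adjoin {R : Type*} [CommRing R] [Algebra R A] {s : Set A⟦X⟧}
    (hs : ∀ f ∈ s, constantCoeff f ∈ (⊥ : Subalgebra R A)) {f : A⟦X⟧}
    (hf : f ∈ Algebra.adjoin R s) : constantCoeff f ∈ (⊥ : Subalgebra R A) := by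
  induction hf using Algebra.adjoin_induction with
  | mem f hf => exact hs f hf
  | algebraMap r => simp [PowerSeries.algebraMap_apply]
  | add f g _ _ hf hg => rw [map_add]; exact add_mem hf hg
  | mul f g _ _ hf hg => rw [map_mul]; exact mul_mem hf hg

theorem factorial_mul_coeff_mem_bot {R : Type*} [CommRing R] [Algebra R A] {s : Set A⟦X⟧}
    (hs₀ : ∀ f ∈ s, constantCoeff f ∈ (⊥ : Subalgebra R A))
    (hs : ∀ f ∈ s, d⁄dX A f ∈ Algebra.adjoin R s) {f : A⟦X⟧} (hf : f ∈ Algebra.adjoin R s)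
    (n : ℕ) : (n ! : A) * coeff n f ∈ (⊥ : Subalgebra R A) := by
  rw [← constantCoeff_iterate_derivative]
  refine constantCoeff_mem_bot_of_mem_adjoin hs₀ ?_
  induction n with
  | zero => exact hf
  | succ n ih =>
    rw [Function.iterate_succ_apply']
    exact derivation_mem_adjoin ((d⁄dX A).restrictScalars R) hs ih

end PowerSeriesLemmas

section FormalSolution

/-- The recursion satisfied by the coefficients `c l`, `2 ≤ l`, of the Laurent expansion
`z⁻² + ∑ c l * z ^ (2 * l - 2)` of the Weierstrass function `℘` of the curve
`y ^ 2 = x ^ 3 + a * x + b`. -/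
structure IsWeierstrassCoeff {K : Type*} [Field K] (a b : K) (c : ℕ → K) : Prop where
  two : c 2 = -a / 5
  three : c 3 = -b / 7
  recurrence : ∀ l : ℕ, 4 ≤ l →
    c l = 3 / ((2 * (l : K) + 1) * ((l : K) - 3)) * ∑ s ∈ Icc 2 (l - 2), c s * c (l - s)

section CommRing

variable {K : Type*} [CommRing K] (c : ℕ → K)

/-- The series `z ^ 2 * ℘(z)` in the variable `z ^ 2`, where `c` lists the Laurent coefficients of
`℘` from index `2` on. -/
noncomputable def xSeries : K⟦X⟧ := 1 + X ^ 2 * PowerSeries.mk fun n => c (n + 2)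

/-- The series `z ^ 3 * D(z)` in the variable `z ^ 2`, where `D` is half the derivative of `℘`. -/
noncomputable def ySeries : K⟦X⟧ := X * d⁄dX K (xSeries c) - xSeries c

theorem coeff_zero_xSeries : coeff 0 (xSeries c) = 1 := by
  simp [xSeries]

theorem coeff_one_xSeries : coeff 1 (xSeries c) = 0 := by
  simp [xSeries, coeff_X_pow_mul', coeff_one]

theorem coeff_add_two_xSeries (n : ℕ) : coeff (n + 2) (xSeries c) = c (n + 2) := by
  simp [xSeries, coeff_X_pow_mul, coeff_one]

theorem coeff_ySeries (n : ℕ) : coeff n (ySeries c) = (n - 1) * coeff n (xSeries c) := by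
  rw [ySeries, map_sub, coeff_X_mul_derivative, sub_one_mul]

theorem X_mul_derivative_xSeries : X * d⁄dX K (xSeries c) = xSeries c + ySeries c := by
  rw [ySeries, add_sub_cancel]

theorem coeff_zero_xSeries_sq : coeff 0 (xSeries c ^ 2) = 1 := by
  simp [xSeries]

theorem coeff_one_xSeries_sq : coeff 1 (xSeries c ^ 2) = 0 := by
  rw [coeff_one_pow, coeff_one_xSeries, mul_zero, zero_mul]

theorem coeff_add_two_xSeries_sq (n : ℕ) :
    coeff (n + 2) (xSeries c ^ 2) = 2 * c (n + 2) + ∑ s ∈ Icc 2 n, c s * c (n + 2 - s) := by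
  let s : K⟦X⟧ := PowerSeries.mk fun n => c (n + 2)
  have hsq : xSeries c ^ 2 = 1 + X ^ 2 * (C 2 * s + X ^ 2 * (s * s)) := by
    rw [xSeries, map_ofNat]
    ring
  rw [hsq, map_add, coeff_X_pow_mul, coeff_one, if_neg (by omega), zero_add, map_add,
    coeff_C_mul, coeff_mk, coeff_X_pow_mul']
  congr 1
  split_ifs with hn
  · obtain ⟨m, rfl⟩ := Nat.exists_eq_add_of_le' hn
    rw [Nat.add_sub_cancel, coeff_mul, Nat.sum_antidiagonal_eq_sum_range_succ_mk,
      ← Ico_add_one_right_eq_Icc, sum_Ico_eq_sum_range]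
    refine sum_congr (by congr 1) fun i hi => ?_
    rw [mem_range] at hi
    rw [coeff_mk, coeff_mk, add_comm i 2, show m + 2 + 2 - (2 + i) = m - i + 2 by omega]
  · rw [Icc_eq_empty (by omega), sum_empty]

theorem coeff_three_ySeries_sq : coeff 3 (ySeries c ^ 2) = -4 * c 3 := by
  have hy₁ : coeff 1 (ySeries c) = 0 := by rw [coeff_ySeries, coeff_one_xSeries, mul_zero]
  rw [sq, coeff_three_mul_of_coeff_one_eq_zero hy₁ hy₁, coeff_ySeries, coeff_ySeries,
    coeff_zero_xSeries, coeff_add_two_xSeries c 1]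
  push_cast
  ring

theorem coeff_three_xSeries_cube : coeff 3 (xSeries c ^ 3) = 3 * c 3 := by
  rw [pow_succ', coeff_three_mul_of_coeff_one_eq_zero (coeff_one_xSeries c)
    (coeff_one_xSeries_sq c), coeff_zero_xSeries, coeff_zero_xSeries_sq,
    coeff_add_two_xSeries c 1, coeff_add_two_xSeries_sq c 1, Icc_eq_empty (by norm_num), sum_empty]
  ring

end CommRing

variable {K : Type*} [Field K] [CharZero K] {a b : K} {c : ℕ → K}

theorem two_mul_X_mul_derivative_ySeries (hc : IsWeierstrassCoeff a b c) :
    2 * (X * d⁄dX K (ySeries c)) = 3 * ySeries c + 3 * xSeries c ^ 2 + C a * X ^ 2 := by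
  ext n
  rw [← map_ofNat C 2, ← map_ofNat C 3]
  simp only [map_add, coeff_C_mul, coeff_X_mul_derivative, coeff_ySeries, coeff_X_pow]
  match n with
  | 0 =>
    rw [coeff_zero_xSeries, coeff_zero_xSeries_sq, if_neg (by norm_num)]
    push_cast
    ring
  | 1 =>
    rw [coeff_one_xSeries, coeff_one_xSeries_sq, if_neg (by norm_num)]
    ring
  | 2 =>
    rw [coeff_add_two_xSeries c 0, coeff_add_two_xSeries_sq c 0, Icc_eq_empty (by norm_num),
      sum_empty, if_pos rfl, hc.two]
    push_cast
    ring
  | 3 =>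
    rw [coeff_add_two_xSeries c 1, coeff_add_two_xSeries_sq c 1, Icc_eq_empty (by norm_num),
      sum_empty, if_neg (by norm_num)]
    push_cast
    ring
  | m + 4 =>
    have hrec := hc.recurrence (m + 4) (by omega)
    have h₁ : 2 * ((m : K) + 4) + 1 ≠ 0 := by exact_mod_cast (2 * (m + 4)).succ_ne_zero
    have h₂ : (m : K) + 4 - 3 ≠ 0 := by
      rw [show (m : K) + 4 - 3 = m + 1 by ring]
      exact m.cast_add_one_ne_zero
    push_cast at hrec
    field_simp at hrec
    rw [coeff_add_two_xSeries c (m + 2), coeff_add_two_xSeries_sq c (m + 2), if_neg (by omega)]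
    push_cast
    linear_combination hrec

theorem ySeries_sq (hc : IsWeierstrassCoeff a b c) :
    ySeries c ^ 2 = xSeries c ^ 3 + C a * X ^ 2 * xSeries c + C b * X ^ 3 := by
  have hx := X_mul_derivative_xSeries c
  have hy := two_mul_X_mul_derivative_ySeries hc
  refine sub_eq_zero.1 (eq_zero_of_X_mul_derivative_eq (k := 3) ?_ ?_)
  · simp only [map_sub, map_add, Derivation.leibniz, derivative_C, derivative_X, smul_eq_mul,
      Derivation.leibniz_pow, nsmul_eq_mul]
    push_cast
    linear_combination ySeries c * hy - (3 * xSeries c ^ 2 + C a * X ^ 2) * hx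
  · have hx₁ : coeff 3 (C a * X ^ 2 * xSeries c) = 0 := by
      rw [mul_assoc, coeff_C_mul, coeff_X_pow_mul _ 2 1, coeff_one_xSeries, mul_zero]
    rw [map_sub, map_add, map_add, coeff_three_ySeries_sq, coeff_three_xSeries_cube, hx₁,
      coeff_C_mul, coeff_X_pow_self, hc.three]
    ring

end FormalSolution

section FormalPoint

/-- The pair `(ξ, η) = (x / z ^ 2, y / z ^ 3)` is a formal parametrization of the curve
`η ^ 2 = ξ ^ 3 + a * ξ + b` with `dξ / dz = 2 * η` and `dη / dz = 3 * ξ ^ 2 + a`. The poles are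
cleared so that `x` and `y` are power series in `z`. -/
structure IsFormalPoint {A : Type*} [CommRing A] (a b : A) (x y : A⟦X⟧) : Prop where
  X_mul_derivative_fst : X * d⁄dX A x = 2 * x + 2 * y
  X_mul_derivative_snd : X * d⁄dX A y = 3 * y + 3 * x ^ 2 + C a * X ^ 4
  snd_sq : y ^ 2 = x ^ 3 + C a * X ^ 4 * x + C b * X ^ 6

theorem IsWeierstrassCoeff.isFormalPoint {K : Type*} [Field K] [CharZero K] {a b : K} {c : ℕ → K}
    (hc : IsWeierstrassCoeff a b c) :
    IsFormalPoint a b (expand 2 two_ne_zero (xSeries c)) (expand 2 two_ne_zero (ySeries c)) where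
  X_mul_derivative_fst := by
    rw [X_mul_derivative_expand, X_mul_derivative_xSeries, map_add, mul_add, Nat.cast_ofNat]
  X_mul_derivative_snd := by
    have h := congrArg (expand 2 two_ne_zero) (two_mul_X_mul_derivative_ySeries hc)
    simp only [map_add, map_mul, map_pow, map_ofNat, expand_C, expand_X] at h
    rw [X_mul_derivative_expand, map_mul, expand_X, Nat.cast_ofNat, h]
    ring
  snd_sq := by
    have h := congrArg (expand 2 two_ne_zero) (ySeries_sq hc)
    simp only [map_add, map_mul, map_pow, expand_C, expand_X] at h
    rw [h]
    ring

variable {A : Type*} [CommRing A] {a b : A} {x y v : A⟦X⟧}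

-- With `v = y⁻¹`, the series `X * (x * v)` and `X ^ 3 * v` are the coordinates `t = ξ / η` and
-- `w = 1 / η` at the point at infinity of the curve of `IsFormalPoint`.
theorem IsFormalPoint.derivative_t (h : IsFormalPoint a b x y) (hyv : y * v = 1) :
    d⁄dX A (X * (x * v)) =
      -1 + 2 * C a * (X * (x * v)) * (X ^ 3 * v) + 3 * C b * (X ^ 3 * v) ^ 2 := by
  have hv : d⁄dX A v = -v ^ 2 * d⁄dX A y :=
    (d⁄dX A).leibniz_of_mul_eq_one (by rw [mul_comm, hyv])
  apply X_mul_cancel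
  simp only [Derivation.leibniz, derivative_X, smul_eq_mul, hv]
  linear_combination -X * x * v ^ 2 * h.X_mul_derivative_snd + X * v * h.X_mul_derivative_fst +
    3 * X * v ^ 2 * h.snd_sq - X * (3 * x * v - 2 + 3 * (v * y + 1)) * hyv

theorem IsFormalPoint.derivative_w (h : IsFormalPoint a b x y) (hyv : y * v = 1) :
    d⁄dX A (X ^ 3 * v) = -(3 * (X * (x * v)) ^ 2 + C a * (X ^ 3 * v) ^ 2) := by
  have hv : d⁄dX A v = -v ^ 2 * d⁄dX A y :=
    (d⁄dX A).leibniz_of_mul_eq_one (by rw [mul_comm, hyv])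
  apply X_mul_cancel
  simp only [Derivation.leibniz, derivative_X, smul_eq_mul, Derivation.leibniz_pow, nsmul_eq_mul,
    hv]
  push_cast
  linear_combination -X ^ 3 * v ^ 2 * h.X_mul_derivative_snd - 3 * X ^ 3 * v * hyv

theorem IsFormalPoint.factorial_mul_coeff_t_mem_bot {R : Type*} [CommRing R] [Algebra R A]
    {a b : R} (h : IsFormalPoint (algebraMap R A a) (algebraMap R A b) x y) (hyv : y * v = 1)
    (n : ℕ) : (n ! : A) * coeff n (X * (x * v)) ∈ (⊥ : Subalgebra R A) := by
  set t := X * (x * v) with ht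
  set w := X ^ 3 * v with hw
  have ht_mem : t ∈ Algebra.adjoin R {t, w} := Algebra.subset_adjoin (by simp)
  have hw_mem : w ∈ Algebra.adjoin R {t, w} := Algebra.subset_adjoin (by simp)
  have hC (r : R) : C (algebraMap R A r) ∈ Algebra.adjoin R {t, w} := by
    rw [← PowerSeries.algebraMap_apply]
    exact Subalgebra.algebraMap_mem _ r
  refine factorial_mul_coeff_mem_bot (s := {t, w}) ?_ ?_ ht_mem n
  · rintro f (rfl | rfl) <;> simp [ht, hw]
  · rintro f (rfl | rfl)
    · rw [ht, h.derivative_t hyv, ← ht, ← hw]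
      exact add_mem (add_mem (neg_mem (one_mem _))
        (mul_mem (mul_mem (mul_mem (ofNat_mem _ 2) (hC a)) ht_mem) hw_mem))
        (mul_mem (mul_mem (ofNat_mem _ 3) (hC b)) (pow_mem hw_mem 2))
    · rw [hw, h.derivative_w hyv, ← ht, ← hw]
      exact neg_mem (add_mem (mul_mem (ofNat_mem _ 3) (pow_mem ht_mem 2))
        (mul_mem (hC a) (pow_mem hw_mem 2)))

end FormalPoint

section DominatedSubring

/-- The power series whose coefficients up to degree `N` satisfy `‖coeff n f‖ ≤ ρ ^ n`. The bound on
the degree allows implicit equations to be treated by induction on `N`. -/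
def dominatedSubring (K : Type*) [NormedField K] [IsUltrametricDist K] (ρ : ℝ≥0) (N : ℕ) :
    Subring K⟦X⟧ where
  carrier := {f | ∀ n ≤ N, ‖coeff n f‖ ≤ ρ ^ n}
  zero_mem' n _ := by simp
  one_mem' n _ := by
    rw [coeff_one]
    split_ifs with hn <;> simp [hn]
  add_mem' hf hg n hn := by
    rw [map_add]
    exact (IsUltrametricDist.norm_add_le_max _ _).trans (max_le (hf n hn) (hg n hn))
  neg_mem' hf n hn := by simpa using hf n hn
  mul_mem' {f g} hf hg n hn := by
    rw [coeff_mul]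
    refine IsUltrametricDist.norm_sum_le_of_forall_le_of_nonneg (by positivity) fun ij hij => ?_
    rw [HasAntidiagonal.mem_antidiagonal] at hij
    rw [norm_mul, ← hij, pow_add]
    gcongr
    exacts [hf _ (by omega), hg _ (by omega)]

variable {K : Type*} [NormedField K] [IsUltrametricDist K] {ρ : ℝ≥0} {N : ℕ} {f g : K⟦X⟧}

theorem C_mem_dominatedSubring {u : K} (hu : ‖u‖ ≤ 1) : C u ∈ dominatedSubring K ρ N := by
  intro n _
  rw [coeff_C]
  split_ifs with hn <;> simp [hn, hu]

theorem X_mem_dominatedSubring (hρ : 1 ≤ ρ) : X ∈ dominatedSubring K ρ N := by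
  intro n _
  rw [coeff_X]
  split_ifs with hn <;> simp [hn, hρ]

theorem mul_mem_dominatedSubring_succ (hf : f ∈ dominatedSubring K ρ N)
    (hg : g ∈ dominatedSubring K ρ (N + 1)) (hg₀ : constantCoeff g = 0) :
    f * g ∈ dominatedSubring K ρ (N + 1) := by
  intro n hn
  rw [coeff_mul]
  refine IsUltrametricDist.norm_sum_le_of_forall_le_of_nonneg (by positivity) fun ij hij => ?_
  rw [HasAntidiagonal.mem_antidiagonal] at hij
  rw [norm_mul, ← hij, pow_add]
  obtain hj | hj := eq_or_ne ij.2 0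
  · rw [hj, coeff_zero_eq_constantCoeff_apply, hg₀, norm_zero, mul_zero]
    positivity
  · gcongr
    exacts [hf _ (by omega), hg _ (by omega)]

theorem mem_dominatedSubring_of_mul_eq_one (hfg : f * g = 1) (hg₀ : ‖constantCoeff g‖ = 1)
    (hg : ∀ N, g ∈ dominatedSubring K ρ N) : f ∈ dominatedSubring K ρ N := by
  have hne : constantCoeff g ≠ 0 := norm_ne_zero_iff.1 (by simp [hg₀])
  have hinv : C (constantCoeff g)⁻¹ * C (constantCoeff g) = 1 := by
    rw [← map_mul, inv_mul_cancel₀ hne, map_one]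
  have hf : f = C (constantCoeff g)⁻¹ * (1 - f * (g - C (constantCoeff g))) := by
    linear_combination C (constantCoeff g)⁻¹ * hfg - f * hinv
  have hC : ∀ N, C (constantCoeff g) ∈ dominatedSubring K ρ N :=
    fun N => C_mem_dominatedSubring hg₀.le
  have hCinv : ∀ N, C (constantCoeff g)⁻¹ ∈ dominatedSubring K ρ N :=
    fun N => C_mem_dominatedSubring (by simp [hg₀])
  induction N with
  | zero =>
    intro n hn
    obtain rfl := Nat.le_zero.1 hn
    have hf₀ : ‖constantCoeff f‖ * ‖constantCoeff g‖ = 1 := by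
      rw [← norm_mul, ← map_mul, hfg, map_one, norm_one]
    rw [hg₀, mul_one] at hf₀
    simp [hf₀]
  | succ N ih =>
    rw [hf]
    exact mul_mem (hCinv _) (sub_mem (one_mem _)
      (mul_mem_dominatedSubring_succ ih (sub_mem (hg _) (hC _)) (by simp)))

theorem mem_dominatedSubring_of_formal_curve {a b : K} (ha : ‖a‖ ≤ 1) (hb : ‖b‖ ≤ 1)
    (hρ : 1 ≤ ρ) {τ ω : K⟦X⟧} (hω : ω = τ ^ 3 + C a * X ^ 4 * τ * ω ^ 2 + C b * X ^ 6 * ω ^ 3)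
    (hτ : ∀ N, τ ∈ dominatedSubring K ρ N) : ω ∈ dominatedSubring K ρ N := by
  have hX : ∀ N, X ∈ dominatedSubring K ρ N := fun N => X_mem_dominatedSubring hρ
  have hCa : ∀ N, C a ∈ dominatedSubring K ρ N := fun N => C_mem_dominatedSubring ha
  have hCb : ∀ N, C b ∈ dominatedSubring K ρ N := fun N => C_mem_dominatedSubring hb
  induction N with
  | zero =>
    intro n hn
    obtain rfl := Nat.le_zero.1 hn
    have := pow_mem (hτ 0) 3 0 le_rfl
    rw [hω]
    simpa using this
  | succ N ih =>
    have hmem : C a * X ^ 3 * τ * ω ^ 2 + C b * X ^ 5 * ω ^ 3 ∈ dominatedSubring K ρ N :=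
      add_mem (mul_mem (mul_mem (mul_mem (hCa N) (pow_mem (hX N) 3)) (hτ N)) (pow_mem ih 2))
        (mul_mem (mul_mem (hCb N) (pow_mem (hX N) 5)) (pow_mem ih 3))
    have hω' : ω = τ ^ 3 + (C a * X ^ 3 * τ * ω ^ 2 + C b * X ^ 5 * ω ^ 3) * X := by
      linear_combination hω
    rw [hω']
    exact add_mem (pow_mem (hτ _) 3)
      (mul_mem_dominatedSubring_succ hmem (hX _) constantCoeff_X)

end DominatedSubring

section Evaluation

variable {K : Type*} [NormedField K] {u : K}

theorem isRestricted_of_norm_coeff_le_pow {f : K⟦X⟧} {r : ℝ≥0}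
    (hf : ∀ n, ‖coeff n f‖ ≤ r ^ n) (hu : r * ‖u‖ < 1) : IsRestricted ‖u‖ f := by
  rw [isRestricted_iff']
  refine squeeze_zero (fun n => by positivity) (fun n => ?_)
    (tendsto_pow_atTop_nhds_zero_of_lt_one (by positivity) hu)
  rw [mul_pow]
  gcongr
  exact hf n

variable [IsUltrametricDist K]

theorem summable_coeff_mul_pow [CompleteSpace K] {f : K⟦X⟧} (hf : IsRestricted ‖u‖ f) :
    Summable fun n => coeff n f * u ^ n := by
  refine NonarchimedeanAddGroup.summable_of_tendsto_cofinite_zero ?_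
  rw [tendsto_zero_iff_norm_tendsto_zero]
  simpa using (isRestricted_iff _ f).1 hf

theorem tsum_coeff_mul_mul_pow {f g : K⟦X⟧} (hf : Summable fun n => coeff n f * u ^ n)
    (hg : Summable fun n => coeff n g * u ^ n) :
    ∑' n, coeff n (f * g) * u ^ n = (∑' n, coeff n f * u ^ n) * ∑' n, coeff n g * u ^ n := by
  have : NonarchimedeanRing K := ⟨NonarchimedeanAddGroup.is_nonarchimedean⟩
  have hfg := hf.mul_of_nonarchimedean hg
  rw [hf.tsum_mul_tsum_eq_tsum_sum_antidiagonal hg hfg]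
  refine tsum_congr fun n => ?_
  rw [coeff_mul, sum_mul]
  refine sum_congr rfl fun ij hij => ?_
  rw [HasAntidiagonal.mem_antidiagonal] at hij
  rw [← hij, pow_add, mul_mul_mul_comm]

variable [CompleteSpace K]

/-- Evaluation at `u` of the power series converging on the closed disc of radius `‖u‖`. -/
noncomputable def evalHom (u : K) : IsRestricted.subring (R := K) ‖u‖ →+* K where
  toFun f := ∑' n, coeff n (f : K⟦X⟧) * u ^ n
  map_zero' := by simp
  map_one' := by
    rw [tsum_eq_single 0 fun n hn => by simp [coeff_one, hn]]
    simp
  map_add' f g := by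
    simp only [Subring.coe_add, map_add, add_mul]
    exact (summable_coeff_mul_pow f.2).tsum_add (summable_coeff_mul_pow g.2)
  map_mul' f g :=
    tsum_coeff_mul_mul_pow (summable_coeff_mul_pow f.2) (summable_coeff_mul_pow g.2)

theorem evalHom_C (a : K) : evalHom u ⟨C a, isRestricted_C _ a⟩ = a := by
  change ∑' n, coeff n (C a) * u ^ n = a
  rw [tsum_eq_single 0 fun n hn => by simp [coeff_C, hn]]
  simp

theorem evalHom_X : evalHom u ⟨X, isRestricted_monomial _ 1 1⟩ = u := by
  change ∑' n, coeff n (X : K⟦X⟧) * u ^ n = u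
  rw [tsum_eq_single 1 fun n hn => by simp [coeff_X, hn]]
  simp

theorem tsum_sq_eq_of_curve {a b : K} {x y : K⟦X⟧} (hx : IsRestricted ‖u‖ x)
    (hy : IsRestricted ‖u‖ y) (hcurve : y ^ 2 = x ^ 3 + C a * X ^ 2 * x + C b * X ^ 3) :
    (∑' n, coeff n y * u ^ n) ^ 2 = (∑' n, coeff n x * u ^ n) ^ 3 +
      a * u ^ 2 * (∑' n, coeff n x * u ^ n) + b * u ^ 3 := by
  let ux : IsRestricted.subring (R := K) ‖u‖ := ⟨x, hx⟩
  let uy : IsRestricted.subring (R := K) ‖u‖ := ⟨y, hy⟩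
  let ua : IsRestricted.subring (R := K) ‖u‖ := ⟨C a, isRestricted_C _ a⟩
  let ub : IsRestricted.subring (R := K) ‖u‖ := ⟨C b, isRestricted_C _ b⟩
  let uX : IsRestricted.subring (R := K) ‖u‖ := ⟨X, isRestricted_monomial _ 1 1⟩
  have h : uy ^ 2 = ux ^ 3 + ua * uX ^ 2 * ux + ub * uX ^ 3 := Subtype.ext hcurve
  have := congrArg (evalHom u) h
  simp only [map_add, map_mul, map_pow] at this
  rwa [evalHom_C, evalHom_C, evalHom_X] at this

end Evaluation

section LaurentSeries

variable {K : Type*} [NormedField K] {z : K}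

theorem laurent_mul_zpow_eq_tsum {f : K⟦X⟧} (hz : z ≠ 0)
    (hf : Summable fun n => coeff n f * (z ^ 2) ^ n) (hf₁ : coeff 1 f = 0) (k : ℤ) :
    (coeff 0 f * z ^ (-k) + ∑' l : ℕ, coeff (l + 2) f * z ^ (2 * ((l : ℤ) + 2) - k)) * z ^ k =
      ∑' n, coeff n f * (z ^ 2) ^ n := by
  have hterm (l : ℕ) : coeff (l + 2) f * z ^ (2 * ((l : ℤ) + 2) - k) * z ^ k =
      coeff (l + 2) f * (z ^ 2) ^ (l + 2) := by
    rw [mul_assoc, ← zpow_add₀ hz, ← pow_mul, ← zpow_natCast]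
    congr 2
    push_cast
    ring
  rw [← hf.sum_add_tsum_nat_add 2, add_mul, ← tsum_mul_right, tsum_congr hterm, sum_range_succ,
    sum_range_one, hf₁, zpow_neg, inv_mul_cancel_right₀ (zpow_ne_zero k hz)]
  simp only [pow_zero, mul_one, zero_mul, add_zero]

theorem wp_mul_sq_eq_tsum {c : ℕ → K} (hz : z ≠ 0)
    (hx : Summable fun n => coeff n (xSeries c) * (z ^ 2) ^ n) :
    (z ^ (-2 : ℤ) + ∑' l : ℕ, c (l + 2) * z ^ (2 * ((l : ℤ) + 2) - 2)) * z ^ 2 =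
      ∑' n, coeff n (xSeries c) * (z ^ 2) ^ n := by
  rw [← laurent_mul_zpow_eq_tsum hz hx (coeff_one_xSeries c) 2, coeff_zero_xSeries, one_mul]
  simp only [coeff_add_two_xSeries, zpow_ofNat]

theorem halfDerivWp_mul_cube_eq_tsum {c : ℕ → K} (hz : z ≠ 0)
    (hy : Summable fun n => coeff n (ySeries c) * (z ^ 2) ^ n) :
    (-z ^ (-3 : ℤ) + ∑' l : ℕ, (((l : K) + 2) - 1) * c (l + 2) * z ^ (2 * ((l : ℤ) + 2) - 3)) *
      z ^ 3 = ∑' n, coeff n (ySeries c) * (z ^ 2) ^ n := by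
  have hy₀ : coeff 0 (ySeries c) = -1 := by
    rw [coeff_ySeries, coeff_zero_xSeries, Nat.cast_zero, zero_sub, mul_one]
  have hy₁ : coeff 1 (ySeries c) = 0 := by rw [coeff_ySeries, coeff_one_xSeries, mul_zero]
  rw [← laurent_mul_zpow_eq_tsum hz hy hy₁ 3, hy₀, neg_one_mul]
  simp only [coeff_ySeries, coeff_add_two_xSeries, Nat.cast_add, Nat.cast_ofNat, zpow_ofNat]

end LaurentSeries

section Convergence

/-- The number `p ^ (1 / (p - 1))`, the inverse of the radius of convergence of the `p`-adic
exponential. -/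
noncomputable def invExpRadius (p : ℕ) : ℝ≥0 := (p : ℝ≥0) ^ ((p - 1 : ℕ) : ℝ)⁻¹

variable {p : ℕ} [Fact p.Prime]

theorem invExpRadius_pow : invExpRadius p ^ (p - 1) = p :=
  NNReal.rpow_inv_natCast_pow _ (Nat.sub_ne_zero_of_lt (Fact.out (p := p.Prime)).one_lt)

theorem one_le_invExpRadius : 1 ≤ invExpRadius p :=
  NNReal.one_le_rpow (by exact_mod_cast (Fact.out (p := p.Prime)).one_le) (by positivity)

theorem one_le_norm_factorial_mul_pow (K : Type*) [NormedField K] [NormedAlgebra ℚ_[p] K]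
    (n : ℕ) : 1 ≤ ‖((n + 1)! : K)‖ * invExpRadius p ^ n := by
  have hval : (p - 1) * padicValNat p (n + 1)! ≤ n :=
    Nat.lt_succ_iff.1 (sub_one_mul_padicValNat_factorial_lt_of_ne_zero p n.succ_ne_zero)
  have hnorm : ‖((n + 1)! : K)‖ = ((p : ℝ) ^ padicValNat p (n + 1)!)⁻¹ := by
    rw [← map_natCast (algebraMap ℚ_[p] K), norm_algebraMap',
      Padic.norm_eq_zpow_neg_valuation (by exact_mod_cast (n + 1).factorial_ne_zero),
      Padic.valuation_natCast, zpow_neg, zpow_natCast]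
  have hpow : (p : ℝ≥0) ^ padicValNat p (n + 1)! ≤ invExpRadius p ^ n := by
    rw [← invExpRadius_pow (p := p), ← pow_mul]
    exact pow_le_pow_right₀ one_le_invExpRadius hval
  have hp : 0 < p := (Fact.out (p := p.Prime)).pos
  rw [hnorm, ← div_eq_inv_mul, one_le_div (by positivity)]
  exact_mod_cast hpow

variable {K : Type*} [NormedField K] [NormedAlgebra ℚ_[p] K] [IsUltrametricDist K] {a b : K}
  {x y v : K⟦X⟧}

theorem mul_mem_dominatedSubring_invExpRadius (ha : ‖a‖ ≤ 1) (hb : ‖b‖ ≤ 1)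
    (h : IsFormalPoint a b x y) (hyv : y * v = 1) (N : ℕ) :
    x * v ∈ dominatedSubring K (invExpRadius p) N := by
  intro n _
  have hmem := IsFormalPoint.factorial_mul_coeff_t_mem_bot
    (R := (NormedField.valuation (K := K)).integer) (a := ⟨a, ha⟩) (b := ⟨b, hb⟩) h hyv (n + 1)
  obtain ⟨r, hr⟩ := Algebra.mem_bot.1 hmem
  have hint : ‖((n + 1)! : K)‖ * ‖coeff n (x * v)‖ ≤ 1 := by
    rw [← norm_mul, ← coeff_succ_X_mul, ← hr]
    exact r.2
  calc ‖coeff n (x * v)‖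
      ≤ ‖((n + 1)! : K)‖ * invExpRadius p ^ n * ‖coeff n (x * v)‖ :=
        le_mul_of_one_le_left (norm_nonneg _) (one_le_norm_factorial_mul_pow K n)
    _ = invExpRadius p ^ n * (‖((n + 1)! : K)‖ * ‖coeff n (x * v)‖) := by ring
    _ ≤ invExpRadius p ^ n := mul_le_of_le_one_right (by positivity) hint

theorem mem_dominatedSubring_invExpRadius (ha : ‖a‖ ≤ 1) (hb : ‖b‖ ≤ 1)
    (h : IsFormalPoint a b x y) (hyv : y * v = 1) (hv₀ : ‖constantCoeff v‖ = 1) (N : ℕ) :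
    x ∈ dominatedSubring K (invExpRadius p) N ∧ y ∈ dominatedSubring K (invExpRadius p) N := by
  have hτ := mul_mem_dominatedSubring_invExpRadius (p := p) ha hb h hyv
  have hv : v = (x * v) ^ 3 + C a * X ^ 4 * (x * v) * v ^ 2 + C b * X ^ 6 * v ^ 3 := by
    linear_combination v ^ 3 * h.snd_sq - v * (y * v + 1) * hyv
  have hyN := mem_dominatedSubring_of_mul_eq_one hyv hv₀ (N := N) fun _ =>
    mem_dominatedSubring_of_formal_curve ha hb one_le_invExpRadius hv hτ
  have hxN : x = x * v * y := by linear_combination -x * hyv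
  exact ⟨hxN ▸ mul_mem (hτ N) hyN, hyN⟩

theorem norm_coeff_le_invExpRadius_sq_pow [CharZero K] {c : ℕ → K} (ha : ‖a‖ ≤ 1) (hb : ‖b‖ ≤ 1)
    (hc : IsWeierstrassCoeff a b c) (n : ℕ) :
    ‖coeff n (xSeries c)‖ ≤ (invExpRadius p ^ 2) ^ n ∧
      ‖coeff n (ySeries c)‖ ≤ (invExpRadius p ^ 2) ^ n := by
  let y := expand 2 two_ne_zero (ySeries c)
  have hy₀ : constantCoeff y = -1 := by
    rw [constantCoeff_expand, ← coeff_zero_eq_constantCoeff_apply, coeff_ySeries,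
      coeff_zero_xSeries, Nat.cast_zero, zero_sub, mul_one]
  have hyv : y * y⁻¹ = 1 := PowerSeries.mul_inv_cancel y (by simp [hy₀])
  have hv₀ : ‖constantCoeff y⁻¹‖ = 1 := by simp [hy₀]
  obtain ⟨hxN, hyN⟩ :=
    mem_dominatedSubring_invExpRadius (p := p) ha hb hc.isFormalPoint hyv hv₀ (2 * n)
  have hx₂ := hxN (2 * n) le_rfl
  have hy₂ := hyN (2 * n) le_rfl
  rw [coeff_expand_mul, pow_mul] at hx₂ hy₂
  exact ⟨hx₂, hy₂⟩

theorem invExpRadius_mul_lt_one {r : ℝ} (hr : r ^ (p - 1) < (p : ℝ)⁻¹) :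
    invExpRadius p * r < 1 := by
  have hp : 1 < p := (Fact.out (p := p.Prime)).one_lt
  refine lt_of_pow_lt_pow_left₀ (p - 1) zero_le_one ?_
  have hpow : (invExpRadius p : ℝ) ^ (p - 1) = p := by exact_mod_cast invExpRadius_pow
  rwa [mul_pow, hpow, one_pow, ← lt_inv_mul_iff₀ (by positivity), mul_one]

theorem pow_sub_one_lt_inv_of_le_inv (hp : Odd p) {r : ℝ} (hr₀ : 0 ≤ r) (hr : r ≤ 1 / p) :
    r ^ (p - 1) < (p : ℝ)⁻¹ := by
  have hp₁ : 1 < p := (Fact.out (p := p.Prime)).one_lt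
  have hp₂ : 1 < p - 1 := by have := hp.ne_two_of_dvd_nat (dvd_refl p); omega
  calc r ^ (p - 1) ≤ (p : ℝ)⁻¹ ^ (p - 1) := by rw [← one_div]; gcongr
    _ < (p : ℝ)⁻¹ := pow_lt_self_of_lt_one₀ (by positivity)
        (inv_lt_one_of_one_lt₀ (by exact_mod_cast hp₁)) hp₂

end Convergence

end PadicWeierstrass

open PadicWeierstrass PowerSeries NNReal in
theorem weierstrass_padic_point_on_curve_general
    (p : ℕ) [Fact p.Prime] {K : Type*} [NormedField K] [NormedAlgebra ℚ_[p] K] [CompleteSpace K]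
    {a b : K} (ha : ‖a‖ ≤ 1) (hb : ‖b‖ ≤ 1) (c : ℕ → K)
    (h2 : c 2 = -a / 5) (h3 : c 3 = -b / 7)
    (hrec : ∀ l : ℕ, 4 ≤ l →
      c l = 3 / ((2 * (l : K) + 1) * ((l : K) - 3)) *
        ∑ s ∈ Finset.Icc 2 (l - 2), c s * c (l - s))
    (z : K) (hz0 : z ≠ 0) (hz : ‖z‖ ^ (p - 1) < (p : ℝ)⁻¹)
    (P D : K)
    (hP : P = z ^ (-2 : ℤ) + ∑' l : ℕ, c (l + 2) * z ^ (2 * ((l : ℤ) + 2) - 2))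
    (hD : D = -z ^ (-3 : ℤ) +
      ∑' l : ℕ, (((l : K) + 2) - 1) * c (l + 2) * z ^ (2 * ((l : ℤ) + 2) - 3)) :
    D ^ 2 = P ^ 3 + a * P + b := by
  have := IsUltrametricDist.of_normedAlgebra (L := K) ℚ_[p]
  have := charZero_of_injective_algebraMap (algebraMap ℚ_[p] K).injective
  have hc : IsWeierstrassCoeff a b c := ⟨h2, h3, hrec⟩
  have hbound := norm_coeff_le_invExpRadius_sq_pow (p := p) ha hb hc
  have hlt : (invExpRadius p ^ 2 : ℝ≥0) * ‖z ^ 2‖ < 1 := by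
    rw [norm_pow, NNReal.coe_pow, ← mul_pow]
    exact pow_lt_one₀ (by positivity) (invExpRadius_mul_lt_one hz) two_ne_zero
  have hx := isRestricted_of_norm_coeff_le_pow (r := invExpRadius p ^ 2) (fun n => (hbound n).1) hlt
  have hy := isRestricted_of_norm_coeff_le_pow (r := invExpRadius p ^ 2) (fun n => (hbound n).2) hlt
  have hcurve := tsum_sq_eq_of_curve hx hy (ySeries_sq hc)
  rw [← wp_mul_sq_eq_tsum hz0 (summable_coeff_mul_pow hx), ← hP,
    ← halfDerivWp_mul_cube_eq_tsum hz0 (summable_coeff_mul_pow hy), ← hD] at hcurve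
  refine mul_right_cancel₀ (pow_ne_zero 6 hz0) ?_
  linear_combination hcurve

/-- For an odd prime `p`, `a b ∈ ℤ_p`, and any nonzero `z ∈ ℚ_p` with `‖z‖ ≤ 1/p`,
the p-adic values `℘(z) = z⁻² + ∑_{l ≥ 2} c l · z^(2l-2)` and
`D(z) = -z⁻³ + ∑_{l ≥ 2} (l-1) · c l · z^(2l-3)` satisfy the short Weierstrass
equation `D(z)² = ℘(z)³ + a·℘(z) + b` in `ℚ_p`. -/
theorem weierstrass_padic_point_on_curve
    (p : ℕ) [Fact p.Prime] (hp : Odd p) (a b : ℤ_[p]) (c : ℕ → ℚ_[p])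
    (h2 : c 2 = -(a : ℚ_[p]) / 5) (h3 : c 3 = -(b : ℚ_[p]) / 7)
    (hrec : ∀ l : ℕ, 4 ≤ l →
      c l = 3 / ((2 * (l : ℚ_[p]) + 1) * ((l : ℚ_[p]) - 3)) *
        ∑ s ∈ Finset.Icc 2 (l - 2), c s * c (l - s))
    (z : ℚ_[p]) (hz0 : z ≠ 0) (hz : ‖z‖ ≤ 1 / p)
    (P D : ℚ_[p])
    (hP : P = z ^ (-2 : ℤ) + ∑' l : ℕ, c (l + 2) * z ^ (2 * ((l : ℤ) + 2) - 2))
    (hD : D = -z ^ (-3 : ℤ) +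
      ∑' l : ℕ, (((l : ℚ_[p]) + 2) - 1) * c (l + 2) * z ^ (2 * ((l : ℤ) + 2) - 3)) :
    D ^ 2 = P ^ 3 + (a : ℚ_[p]) * P + (b : ℚ_[p]) :=
  weierstrass_padic_point_on_curve_general p a.norm_le_one b.norm_le_one c h2 h3 hrec z hz0
    (PadicWeierstrass.pow_sub_one_lt_inv_of_le_inv hp (norm_nonneg z) hz) P D hP hD
end
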